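/- arXiv:2401.05100 — 6 statements merged into one kernel-verified Lean document; each statement's English description precedes it below -/
import Mathlib

section
/- Fix constants α > 0, β ≥ 0, ζ > 0, σ > 0 and set κ := 1 + 2αβ, τ := (1 + αβ)^{-1}. Assume f : ℝ^{n_w} → ℝ is differentiable and σ-strongly convex with ∇f(0) = 0, g : ℝ^{n_w} → ℝ^{n_μ} is differentiable with each component g_i convex and g(0) ≤ 0 componentwise, and h(w;x) := Cw + Dx with C ∈ ℝ^{n_λ×n_w}, D ∈ ℝ^{n_λ×n}. Then for all w ∈ ℝ^{n_w}, x ∈ ℝ^n, λ ∈ ℝ^{n_λ} and μ ∈ ℝ^{n_μ} with μ ≥ 0 componentwise, defining the controller vector field ẇ := −ζ(∇f(w) + ∇g(w)μ + τκCᵀ(λ + β(Cw + Dx))), μ̇ := ζ[g(w)]_μ^+, λ̇ := ζτ(−αλ + Cw + Dx), one has ⟨w, ẇ⟩ + ⟨μ, μ̇⟩ + ⟨λ, λ̇⟩ ≤ ζ [w; x]ᵀ H^C_c [w; x], where H^C_c := [[−σI − βCᵀC, −βCᵀD], [−βDᵀC, (τ/(4α))DᵀD]]. -/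
/-!
The energy `(‖w‖² + ‖μ‖² + ‖λ‖²) / 2` dissipates because its rate splits into three parts. Strong
monotonicity of `∇f` bounds the objective part by `-σ‖w‖²`. The constraint part is nonpositive:
the first-order inequality for `gᵢ` between `w` and the feasible point `0` gives
`gᵢ(w) ≤ ⟨w, ∇gᵢ(w)⟩`, and the projection in `[g(w)]_μ^+` acts only where `μᵢ = 0`. The remaining
coupling part of `λ` with `w` is a quadratic form in `Cw`, `Dx`, `λ`; maximizing it over `λ`, i.e.
completing the square around `λ = Dx / (2α) - βCw`, leaves the claimed supply rate.
-/

open Matrix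

local notation "⟪" x ", " y "⟫" => @inner ℝ _ _ x y

noncomputable def mv {α β : Type*} [Fintype β] (M : Matrix α β ℝ) (v : EuclideanSpace ℝ β) :
    EuclideanSpace ℝ α := WithLp.toLp 2 (M.mulVec v)

/-- The operator `[a]_b^+`. -/
noncomputable def pplus {p : ℕ} (a b : Fin p → ℝ) : Fin p → ℝ :=
  fun i => if 0 < b i then a i else max 0 (a i)

open Set Filter Topology

open scoped InnerProduct

section FirstOrder

variable {E : Type*} [NormedAddCommGroup E] [NormedSpace ℝ E] {s : Set E} {φ : ℝ → ℝ} {f : E → ℝ}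
  {f₁ f₂ : StrongDual ℝ E} {x y : E}

theorem add_fderivWithin_add_le_of_uniformConvexOn (hf : UniformConvexOn s φ f)
    (hx : x ∈ s) (hy : y ∈ s) (hf₁ : HasFDerivWithinAt f f₁ s x) :
    f x + f₁ (y - x) + φ ‖x - y‖ ≤ f y := by
  let γ : ℝ → E := AffineMap.lineMap x y
  have hγ₀ : γ 0 = x := AffineMap.lineMap_apply_zero x y
  have hγs : MapsTo γ (Ioo 0 1) s := fun t ht ↦ hf.1.lineMap_mem hx hy (Ioo_subset_Icc_self ht)
  have hderiv : HasDerivWithinAt (f ∘ γ) (f₁ (y - x)) (Ioo 0 1) 0 :=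
    hf₁.comp_hasDerivWithinAt_of_eq 0 AffineMap.hasDerivWithinAt_lineMap hγs hγ₀.symm
  have hslope : ∀ t ∈ Ioo (0 : ℝ) 1,
      slope (f ∘ γ) 0 t ≤ f y - f x - (1 - t) * φ ‖x - y‖ := by
    intro t ht
    have hconv := hf.2 hx hy (sub_nonneg.2 ht.2.le) ht.1.le (sub_add_cancel 1 t)
    rw [smul_eq_mul, smul_eq_mul, ← AffineMap.lineMap_apply_module] at hconv
    rw [slope_def_field, sub_zero, div_le_iff₀ ht.1, Function.comp_apply, Function.comp_apply, hγ₀]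
    linarith
  have hlim : Tendsto (fun t : ℝ ↦ f y - f x - (1 - t) * φ ‖x - y‖) (𝓝[Ioo 0 1] 0)
      (𝓝 (f y - f x - (1 - 0) * φ ‖x - y‖)) :=
    Continuous.continuousWithinAt (by fun_prop)
  have : (𝓝[Ioo (0 : ℝ) 1] 0).NeBot := left_nhdsWithin_Ioo_neBot one_pos
  have hle := le_of_tendsto_of_tendsto
    ((hasDerivWithinAt_iff_tendsto_slope' left_notMem_Ioo).1 hderiv) hlim
    (eventually_mem_nhdsWithin.mono hslope)
  linarith

theorem two_mul_le_fderivWithin_sub_of_uniformConvexOn (hf : UniformConvexOn s φ f)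
    (hx : x ∈ s) (hy : y ∈ s) (hf₁ : HasFDerivWithinAt f f₁ s x)
    (hf₂ : HasFDerivWithinAt f f₂ s y) : 2 * φ ‖x - y‖ ≤ (f₁ - f₂) (x - y) := by
  have hxy := add_fderivWithin_add_le_of_uniformConvexOn hf hx hy hf₁
  have hyx := add_fderivWithin_add_le_of_uniformConvexOn hf hy hx hf₂
  rw [← neg_sub x y, map_neg] at hxy
  rw [norm_sub_rev] at hyx
  rw [_root_.sub_apply]
  linarith

end FirstOrder

section Gradient

variable {E : Type*} [NormedAddCommGroup E] [InnerProductSpace ℝ E] [CompleteSpace E]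
  {s : Set E} {f : E → ℝ} {x y u v : E}

theorem add_inner_gradientWithin_le_of_convexOn (hf : ConvexOn ℝ s f) (hx : x ∈ s) (hy : y ∈ s)
    (hu : HasGradientWithinAt f u s x) : f x + ⟪u, y - x⟫ ≤ f y := by
  simpa using add_fderivWithin_add_le_of_uniformConvexOn (uniformConvexOn_zero.2 hf)
    hx hy hu.hasFDerivWithinAt

theorem mul_sq_norm_sub_le_inner_of_strongConvexOn {m : ℝ} (hf : StrongConvexOn s m f)
    (hx : x ∈ s) (hy : y ∈ s)
    (hu : HasGradientWithinAt f u s x) (hv : HasGradientWithinAt f v s y) :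
    m * ‖x - y‖ ^ 2 ≤ ⟪u - v, x - y⟫ := by
  have h := two_mul_le_fderivWithin_sub_of_uniformConvexOn hf hx hy
    hu.hasFDerivWithinAt hv.hasFDerivWithinAt
  rw [← map_sub, InnerProductSpace.toDual_apply_apply] at h
  linarith

end Gradient

theorem inner_toLp_pplus {p : ℕ} (a : Fin p → ℝ) {b : EuclideanSpace ℝ (Fin p)}
    (hb : ∀ i, 0 ≤ b i) : ⟪b, WithLp.toLp 2 (pplus a b)⟫ = ∑ i, b i * a i := by
  rw [PiLp.inner_apply]
  refine Finset.sum_congr rfl fun i _ ↦ ?_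
  obtain hi | hi := (hb i).eq_or_lt'
  · simp [hi]
  · simp [pplus, hi, mul_comm]

theorem inner_pplus_le_inner_sum_gradient {E : Type*} [NormedAddCommGroup E]
    [InnerProductSpace ℝ E] [CompleteSpace E] {p : ℕ} {s : Set E} {g : E → Fin p → ℝ}
    {w : E} {u : Fin p → E} {μ : EuclideanSpace ℝ (Fin p)}
    (hgconv : ∀ i, ConvexOn ℝ s fun v ↦ g v i) (hs₀ : 0 ∈ s) (hw : w ∈ s)
    (hg₀ : ∀ i, g 0 i ≤ 0) (hu : ∀ i, HasGradientWithinAt (fun v ↦ g v i) (u i) s w)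
    (hμ : ∀ i, 0 ≤ μ i) :
    ⟪μ, WithLp.toLp 2 (pplus (g w) μ)⟫ ≤ ⟪w, ∑ i, μ i • u i⟫ := by
  rw [inner_toLp_pplus _ hμ, inner_sum]
  refine Finset.sum_le_sum fun i _ ↦ ?_
  have hgw : g w i ≤ ⟪w, u i⟫ := by
    have h := add_inner_gradientWithin_le_of_convexOn (hgconv i) hw hs₀ (hu i)
    rw [zero_sub, inner_neg_right, real_inner_comm] at h
    linarith [hg₀ i]
  rw [real_inner_smul_right]
  exact mul_le_mul_of_nonneg_left hgw (hμ i)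

theorem inner_coupling_eq_sub_sq_norm {E : Type*} [NormedAddCommGroup E] [InnerProductSpace ℝ E]
    {α β τ : ℝ} (hα : α ≠ 0) (hτ : τ * (1 + α * β) = 1) (a d l : E) :
    τ * ⟪l, (-α) • l + a + d⟫ - τ * (1 + 2 * α * β) * ⟪a, l + β • (a + d)⟫ =
      -β * ‖a‖ ^ 2 - 2 * β * ⟪a, d⟫ + τ / (4 * α) * ‖d‖ ^ 2
        - τ * α * ‖β • a + l - (1 / (2 * α)) • d‖ ^ 2 := by
  simp only [← real_inner_self_eq_norm_sq, inner_add_left, inner_add_right, inner_sub_left,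
    inner_sub_right, real_inner_smul_left, real_inner_smul_right, real_inner_comm a l,
    real_inner_comm a d, real_inner_comm l d]
  field_simp
  linear_combination -(16 * α * β * (⟪a, a⟫ + 2 * ⟪a, d⟫)) * hτ

section Matrix

variable {m k l : Type*} [Fintype m] [Fintype k] [Fintype l]

theorem mv_transpose_eq_adjoint [DecidableEq k] (M : Matrix m k ℝ) (y : EuclideanSpace ℝ m) :
    mv Mᵀ y = (M.toEuclideanLin.toContinuousLinearMap†) y := by
  classical
  rw [← LinearMap.adjoint_toContinuousLinearMap, ← Matrix.toEuclideanLin_conjTranspose_eq_adjoint]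
  rfl

theorem dotProduct_transpose_mul_mulVec (M : Matrix m k ℝ) (N : Matrix m l ℝ)
    (w : EuclideanSpace ℝ k) (x : EuclideanSpace ℝ l) :
    w ⬝ᵥ (Mᵀ * N) *ᵥ x = ⟪mv M w, mv N x⟫ := by
  rw [← mulVec_mulVec, dotProduct_mulVec, vecMul_transpose, dotProduct_comm,
    EuclideanSpace.inner_eq_star_dotProduct, star_trivial]
  rfl

theorem sumElim_dotProduct_fromBlocks_gram_mulVec [DecidableEq k] (σ β γ : ℝ) (C : Matrix m k ℝ)
    (D : Matrix m l ℝ) (w : EuclideanSpace ℝ k) (x : EuclideanSpace ℝ l) :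
    Sum.elim w x ⬝ᵥ fromBlocks (-(σ • (1 : Matrix k k ℝ)) - β • (Cᵀ * C)) (-(β • (Cᵀ * D)))
        (-(β • (Dᵀ * C))) (γ • (Dᵀ * D)) *ᵥ Sum.elim w x =
      -σ * ‖w‖ ^ 2 - β * ‖mv C w‖ ^ 2 - 2 * β * ⟪mv C w, mv D x⟫ + γ * ‖mv D x‖ ^ 2 := by
  have hww : w ⬝ᵥ w = ‖w‖ ^ 2 := by
    rw [EuclideanSpace.real_norm_sq_eq]
    simp only [dotProduct, sq]
  simp only [fromBlocks_mulVec, sumElim_dotProduct_sumElim, Sum.elim_comp_inl, Sum.elim_comp_inr,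
    sub_mulVec, neg_mulVec, smul_mulVec, one_mulVec, dotProduct_add, dotProduct_sub,
    dotProduct_neg, dotProduct_smul, dotProduct_transpose_mul_mulVec, hww, smul_eq_mul,
    real_inner_self_eq_norm_sq, real_inner_comm (mv C w) (mv D x)]
  ring

end Matrix

/-- The state `x` acts on the controller only through `Dx`, which `d` stands for. -/
theorem iMPC_controller_dissipativity_general {W L : Type*}
    [NormedAddCommGroup W] [InnerProductSpace ℝ W] [CompleteSpace W]
    [NormedAddCommGroup L] [InnerProductSpace ℝ L] [CompleteSpace L]
    {p : ℕ} {α β ζ σ κ τ : ℝ} (hα : 0 < α) (hαβ : 0 < 1 + α * β) (hζ : 0 ≤ ζ)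
    (hκ : κ = 1 + 2 * α * β) (hτ : τ = (1 + α * β)⁻¹)
    {f : W → ℝ} {f' : W → W} (hf : ∀ v, HasGradientAt f (f' v) v)
    (hfsc : StrongConvexOn univ σ f) (hf0 : f' 0 = 0)
    {g : W → Fin p → ℝ} {g' : W → Fin p → W}
    (hg : ∀ v i, HasGradientAt (fun u ↦ g u i) (g' v i) v)
    (hgconv : ∀ i, ConvexOn ℝ univ fun v ↦ g v i) (hg0 : ∀ i, g 0 i ≤ 0)
    (C : W →L[ℝ] L) (d : L) (w : W) (lam : L) {μ : EuclideanSpace ℝ (Fin p)}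
    (hμ : ∀ i, 0 ≤ μ i) :
    ⟪w, (-ζ) • (f' w + ∑ i, μ i • g' w i + (τ * κ) • (C†) (lam + β • (C w + d)))⟫
        + ⟪μ, ζ • WithLp.toLp 2 (pplus (g w) μ)⟫
        + ⟪lam, (ζ * τ) • ((-α) • lam + C w + d)⟫ ≤
      ζ * (-σ * ‖w‖ ^ 2 - β * ‖C w‖ ^ 2 - 2 * β * ⟪C w, d⟫ + τ / (4 * α) * ‖d‖ ^ 2) := by
  have hobjective : σ * ‖w‖ ^ 2 ≤ ⟪w, f' w⟫ := by
    simpa [hf0, real_inner_comm] using mul_sq_norm_sub_le_inner_of_strongConvexOn hfsc (mem_univ w)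
      (mem_univ 0) (hasGradientWithinAt_univ.2 (hf w)) (hasGradientWithinAt_univ.2 (hf 0))
  have hconstraint : ⟪μ, WithLp.toLp 2 (pplus (g w) μ)⟫ ≤ ⟪w, ∑ i, μ i • g' w i⟫ :=
    inner_pplus_le_inner_sum_gradient hgconv (mem_univ 0) (mem_univ w) hg0
      (fun i ↦ hasGradientWithinAt_univ.2 (hg w i)) hμ
  have hcoupling := inner_coupling_eq_sub_sq_norm hα.ne'
    (by rw [hτ, inv_mul_cancel₀ hαβ.ne'] : τ * (1 + α * β) = 1) (C w) d lam
  have hsq : 0 ≤ τ * α * ‖β • C w + lam - (1 / (2 * α)) • d‖ ^ 2 := by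
    rw [hτ]; positivity
  rw [← hκ] at hcoupling
  simp only [real_inner_smul_right, inner_add_right w, ContinuousLinearMap.adjoint_inner_right]
  calc
    _ = ζ * (-⟪w, f' w⟫ + (⟪μ, WithLp.toLp 2 (pplus (g w) μ)⟫ - ⟪w, ∑ i, μ i • g' w i⟫) +
          (τ * ⟪lam, (-α) • lam + C w + d⟫ - τ * κ * ⟪C w, lam + β • (C w + d)⟫)) := by ring
    _ ≤ _ := mul_le_mul_of_nonneg_left (by linarith) hζ

/-- dissipation inequality for the continuous-time primal-dual gradient controller:
`⟨w, ẇ⟩ + ⟨μ, μ̇⟩ + ⟨λ, λ̇⟩ ≤ ζ [w; x]ᵀ H^C_c [w; x]`. -/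
theorem iMPC_controller_dissipativity
    (nw n nμ nl : ℕ) (α β ζ σ κ τ : ℝ)
    (hα : 0 < α) (hβ : 0 ≤ β) (hζ : 0 < ζ) (hσ : 0 < σ)
    (hκ : κ = 1 + 2 * α * β) (hτ : τ = (1 + α * β)⁻¹)
    (f : EuclideanSpace ℝ (Fin nw) → ℝ)
    (f' : EuclideanSpace ℝ (Fin nw) → EuclideanSpace ℝ (Fin nw))
    (hfdiff : ∀ v, HasGradientAt f (f' v) v)
    (hfsc : ConvexOn ℝ Set.univ (fun v => f v - σ / 2 * ‖v‖ ^ 2))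
    (hf0 : f' 0 = 0)
    (g : EuclideanSpace ℝ (Fin nw) → Fin nμ → ℝ)
    (g' : EuclideanSpace ℝ (Fin nw) → Fin nμ → EuclideanSpace ℝ (Fin nw))
    (hgdiff : ∀ v i, HasGradientAt (fun u => g u i) (g' v i) v)
    (hgconv : ∀ i, ConvexOn ℝ Set.univ fun v => g v i)
    (hg0 : ∀ i, g 0 i ≤ 0)
    (C : Matrix (Fin nl) (Fin nw) ℝ) (D : Matrix (Fin nl) (Fin n) ℝ) :
    ∀ (w : EuclideanSpace ℝ (Fin nw)) (x : EuclideanSpace ℝ (Fin n))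
      (lam : EuclideanSpace ℝ (Fin nl)) (μ : EuclideanSpace ℝ (Fin nμ)),
      (∀ i, 0 ≤ μ i) →
      let wdot : EuclideanSpace ℝ (Fin nw) :=
        (-ζ) • (f' w + (∑ i, μ i • g' w i) +
          (τ * κ) • mv Cᵀ (lam + β • (mv C w + mv D x)));
      let μdot : EuclideanSpace ℝ (Fin nμ) := ζ • (WithLp.toLp 2 (pplus (g w) μ) : EuclideanSpace ℝ (Fin nμ));
      let lamdot : EuclideanSpace ℝ (Fin nl) := (ζ * τ) • ((-α) • lam + mv C w + mv D x);
      let HCc : Matrix (Fin nw ⊕ Fin n) (Fin nw ⊕ Fin n) ℝ :=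
        Matrix.fromBlocks (-(σ • (1 : Matrix (Fin nw) (Fin nw) ℝ)) - β • (Cᵀ * C))
          (-(β • (Cᵀ * D))) (-(β • (Dᵀ * C))) ((τ / (4 * α)) • (Dᵀ * D));
      ⟪w, wdot⟫ + ⟪μ, μdot⟫ + ⟪lam, lamdot⟫ ≤
        ζ * (Sum.elim w x ⬝ᵥ HCc.mulVec (Sum.elim w x)) := by
  intro w x lam μ hμ
  dsimp only
  rw [sumElim_dotProduct_fromBlocks_gram_mulVec, mv_transpose_eq_adjoint]
  exact iMPC_controller_dissipativity_general hα (by positivity) hζ.le hκ hτ hfdiff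
    (strongConvexOn_iff_convex.2 hfsc) hf0 hgdiff hgconv hg0
    C.toEuclideanLin.toContinuousLinearMap (mv D x) w lam hμ
end

section
/- Fix constants α > 0, β ≥ 0, σ > 0, δ > 0 and set κ := 1 + 2αβ, τ := (1 + αβ)^{-1}. Let C ∈ ℝ^{n_λ×n_w}, D ∈ ℝ^{n_λ×n}, E ∈ ℝ^{m×n_w}, and let H^P_c be any symmetric (n+m)×(n+m) matrix. Define H^C_c := [[−σI − βCᵀC, −βCᵀD], [−βDᵀC, (τ/(4α))DᵀD]], W := [[O, I], [E, O]] (so W[w; x] = [x; Ew]), H_c := H^C_c + δWᵀH^P_cW, and H̄^C_c := [[−σI − τκβCᵀC, −(τκβ/2)CᵀD, −ταβCᵀ], [−(τκβ/2)DᵀC, O, (τ/2)Dᵀ], [−ταβC, (τ/2)D, −ταI]], W̄ := [W | O] (so W̄[w; x; λ] = [x; Ew]), H̄_c := H̄^C_c + δW̄ᵀH^P_cW̄. Then H_c ≺ 0 if and only if H̄_c ≺ 0. -/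
open Matrix

/-!
`H_c` is the Schur complement in `H̄_c` of the negative definite block `-ταI`. Completing the square
in `λ` adds `(τα)⁻¹ B Bᵀ` to the block on `[w; x]`, where `B` is the coupling column of `λ`; the
identities `τ(1 + αβ) = 1` and `κ = 1 + 2αβ` turn the result into `H^C_c`. The term contributed by
`H^P_c` does not involve `λ`, so it passes through unchanged.
-/

section SchurComplement

variable {m n : Type*} [Finite m]

lemma posDef_fromBlocks_zero_iff {R : Type*} [Ring R] [PartialOrder R] [StarRing R]
    [StarOrderedRing R] [Finite n] {A : Matrix m m R} {D : Matrix n n R} :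
    (fromBlocks A 0 0 D).PosDef ↔ A.PosDef ∧ D.PosDef := by
  cases nonempty_fintype m
  cases nonempty_fintype n
  refine ⟨fun h ↦ ⟨h.submatrix Sum.inl_injective, h.submatrix Sum.inr_injective⟩, ?_⟩
  rintro ⟨hA, hD⟩
  refine .of_dotProduct_mulVec_pos (hA.isHermitian.fromBlocks conjTranspose_zero hD.isHermitian)
    fun v hv ↦ ?_
  obtain ⟨x, y, rfl⟩ : ∃ x y, v = Sum.elim x y := ⟨_, _, (Sum.elim_comp_inl_inr v).symm⟩
  have quadratic_form_eq : star (Sum.elim x y) ⬝ᵥ (fromBlocks A 0 0 D *ᵥ Sum.elim x y) =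
      star x ⬝ᵥ (A *ᵥ x) + star y ⬝ᵥ (D *ᵥ y) := by
    simp [fromBlocks_mulVec, Function.star_sumElim]
  rw [quadratic_form_eq]
  obtain rfl | hx := eq_or_ne x 0
  · have hy : y ≠ 0 := by
      rintro rfl
      exact hv Sum.elim_zero_zero
    simpa using hD.dotProduct_mulVec_pos hy
  · exact add_pos_of_pos_of_nonneg (hA.dotProduct_mulVec_pos hx)
      (hD.posSemidef.dotProduct_mulVec_nonneg y)

lemma posDef_fromBlocks_iff_posDef_schurComplement {R : Type*} [CommRing R] [PartialOrder R]
    [StarRing R] [StarOrderedRing R] [Fintype n] [DecidableEq n]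
    (A : Matrix m m R) (B : Matrix m n R) {D : Matrix n n R} (hD : D.PosDef) [Invertible D] :
    (fromBlocks A B Bᴴ D).PosDef ↔ (A - B * D⁻¹ * Bᴴ).PosDef := by
  classical
  cases nonempty_fintype m
  let U : Matrix (m ⊕ n) (m ⊕ n) R := fromBlocks 1 0 (D⁻¹ * Bᴴ) 1
  have hU : IsUnit U := isUnit_fromBlocks_zero₁₂.2 ⟨isUnit_one, isUnit_one⟩
  have star_U : star U = fromBlocks 1 (B * D⁻¹) 0 1 := by
    simp [U, star_eq_conjTranspose, fromBlocks_conjTranspose, conjTranspose_nonsing_inv,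
      hD.isHermitian.eq]
  have block_congruence :
      fromBlocks A B Bᴴ D = star U * fromBlocks (A - B * D⁻¹ * Bᴴ) 0 0 D * U := by
    rw [star_U, fromBlocks_eq_of_invertible₂₂, invOf_eq_nonsing_inv]
  rw [block_congruence, hU.posDef_star_left_conjugate_iff, posDef_fromBlocks_zero_iff,
    and_iff_left hD]

open scoped ComplexOrder in
lemma posDef_neg_fromBlocks_neg_smul_one_iff {𝕜 : Type*} [RCLike 𝕜] [Fintype n] [DecidableEq n]
    (A : Matrix m m 𝕜) (B : Matrix m n 𝕜) {c : ℝ} (hc : 0 < c) :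
    (-fromBlocks A B Bᴴ (-(c • (1 : Matrix n n 𝕜)))).PosDef ↔
      (-(A + c⁻¹ • (B * Bᴴ))).PosDef := by
  have hD : (c • (1 : Matrix n n 𝕜)).PosDef := PosDef.one.smul hc
  let := hD.isUnit.invertible
  have inv_smul_one : (c • (1 : Matrix n n 𝕜))⁻¹ = c⁻¹ • 1 :=
    inv_eq_right_inv (by simp [smul_smul, hc.ne'])
  have schur := posDef_fromBlocks_iff_posDef_schurComplement (-A) (-B) hD
  rwa [inv_smul_one, conjTranspose_neg, Matrix.mul_smul, Matrix.mul_one, Matrix.smul_mul,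
    Matrix.neg_mul, Matrix.mul_neg, neg_neg, ← neg_add', ← neg_neg (c • (1 : Matrix n n 𝕜)),
    ← fromBlocks_neg] at schur

end SchurComplement

lemma transpose_fromCols_zero_mul_mul {R m n q : Type*} [Semiring R] [Fintype q]
    (W : Matrix q m R) (P : Matrix q q R) :
    (fromCols W (0 : Matrix q n R))ᵀ * P * fromCols W (0 : Matrix q n R) =
      fromBlocks (Wᵀ * P * W) 0 0 0 := by
  rw [transpose_fromCols, transpose_zero, fromRows_mul, fromRows_mul_fromCols]
  simp only [Matrix.zero_mul, Matrix.mul_zero]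

section Lifting

variable {𝕜 l w x : Type*} [RCLike 𝕜]

/-- The matrix `H^C_c` on `[w; x]`, over any `RCLike` field. `τ` is a parameter, not yet tied to
`α` and `β`. -/
noncomputable def reducedForm [Fintype l] [DecidableEq w] (α β σ τ : ℝ)
    (C : Matrix l w 𝕜) (D : Matrix l x 𝕜) : Matrix (w ⊕ x) (w ⊕ x) 𝕜 :=
  fromBlocks (-(σ • (1 : Matrix w w 𝕜)) - β • (Cᴴ * C)) (-(β • (Cᴴ * D)))
    (-(β • (Dᴴ * C))) ((τ / (4 * α)) • (Dᴴ * D))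

/-- The block of `H̄^C_c` on `[w; x]`, from which eliminating `λ` produces `H^C_c`. -/
noncomputable def liftedLeadingBlock [Fintype l] [DecidableEq w] (β σ κ τ : ℝ)
    (C : Matrix l w 𝕜) (D : Matrix l x 𝕜) : Matrix (w ⊕ x) (w ⊕ x) 𝕜 :=
  fromBlocks (-(σ • (1 : Matrix w w 𝕜)) - (τ * κ * β) • (Cᴴ * C))
    (-((τ * κ * β / 2) • (Cᴴ * D))) (-((τ * κ * β / 2) • (Dᴴ * C))) 0

/-- The block column of `H̄^C_c` that couples `[w; x]` to `λ`, the factor of the Schur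
correction. -/
noncomputable def liftedCoupling (α β τ : ℝ) (C : Matrix l w 𝕜) (D : Matrix l x 𝕜) :
    Matrix (w ⊕ x) l 𝕜 :=
  fromRows (-((τ * α * β) • Cᴴ)) ((τ / 2) • Dᴴ)

/-- The matrix `H̄^C_c` on `[w; x; λ]`, with `λ` split off as the second block. `κ` and `τ` are
parameters, not yet tied to `α` and `β`. -/
noncomputable def liftedForm [Fintype l] [DecidableEq l] [DecidableEq w]
    (α β σ κ τ : ℝ) (C : Matrix l w 𝕜) (D : Matrix l x 𝕜) :
    Matrix ((w ⊕ x) ⊕ l) ((w ⊕ x) ⊕ l) 𝕜 :=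
  fromBlocks (liftedLeadingBlock β σ κ τ C D) (liftedCoupling α β τ C D)
    (fromCols (-((τ * α * β) • C)) ((τ / 2) • D)) (-((τ * α) • (1 : Matrix l l 𝕜)))

lemma conjTranspose_liftedCoupling (α β τ : ℝ) (C : Matrix l w 𝕜) (D : Matrix l x 𝕜) :
    (liftedCoupling α β τ C D)ᴴ = fromCols (-((τ * α * β) • C)) ((τ / 2) • D) := by
  simp [liftedCoupling, conjTranspose_fromRows_eq_fromCols_conjTranspose, conjTranspose_smul]

variable [Fintype l] [DecidableEq w]

lemma liftedLeadingBlock_add_coupling {α β κ τ : ℝ} (hα : α ≠ 0) (hτ : τ * (1 + α * β) = 1)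
    (hκ : κ = 1 + 2 * α * β) (σ : ℝ) (C : Matrix l w 𝕜) (D : Matrix l x 𝕜) :
    liftedLeadingBlock β σ κ τ C D +
        (τ * α)⁻¹ • (liftedCoupling α β τ C D * (liftedCoupling α β τ C D)ᴴ) =
      reducedForm α β σ τ C D := by
  have hτ0 : τ ≠ 0 := left_ne_zero_of_mul_eq_one hτ
  have coeff_CC : -(τ * κ * β) + (τ * α)⁻¹ * (τ * α * β) * (τ * α * β) = -β := by
    rw [hκ]
    field_simp
    linear_combination -β * hτ
  have coeff_CD : -(τ * κ * β / 2) - (τ * α)⁻¹ * (τ * α * β) * (τ / 2) = -β := by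
    rw [hκ]
    field_simp
    linear_combination (-2 * β) * hτ
  have coeff_DD : (τ * α)⁻¹ * (τ / 2) * (τ / 2) = τ / (4 * α) := by
    field_simp
    norm_num
  rw [conjTranspose_liftedCoupling, liftedCoupling, fromRows_mul_fromCols, fromBlocks_smul,
    liftedLeadingBlock, fromBlocks_add, reducedForm]
  simp only [Matrix.neg_mul, Matrix.mul_neg, Matrix.smul_mul, Matrix.mul_smul]
  congr 1
  · generalize Cᴴ * C = CC
    linear_combination (norm := module) coeff_CC • CC
  · generalize Cᴴ * D = CD
    linear_combination (norm := module) coeff_CD • CD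
  · generalize Dᴴ * C = DC
    linear_combination (norm := module) coeff_CD • DC
  · generalize Dᴴ * D = DD
    linear_combination (norm := module) coeff_DD • DD

open scoped ComplexOrder in
theorem Hc_negdef_iff_Hbarc_negdef_general [Finite w] [Finite x] [DecidableEq l] {α β κ τ : ℝ}
    (hα : 0 < α) (hαβ : 0 < 1 + α * β) (hκ : κ = 1 + 2 * α * β) (hτ : τ = (1 + α * β)⁻¹)
    (σ : ℝ) (C : Matrix l w 𝕜) (D : Matrix l x 𝕜) (Z : Matrix (w ⊕ x) (w ⊕ x) 𝕜) :
    (-(reducedForm α β σ τ C D + Z)).PosDef ↔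
      (-(liftedForm α β σ κ τ C D + fromBlocks Z 0 0 0)).PosDef := by
  have hτ_mul : τ * (1 + α * β) = 1 := by rw [hτ, inv_mul_cancel₀ hαβ.ne']
  have hτα : 0 < τ * α := mul_pos (hτ ▸ inv_pos.2 hαβ) hα
  rw [liftedForm, ← conjTranspose_liftedCoupling, fromBlocks_add]
  simp only [add_zero]
  rw [posDef_neg_fromBlocks_neg_smul_one_iff _ _ hτα, add_right_comm,
    liftedLeadingBlock_add_coupling hα.ne' hτ_mul hκ]

end Lifting

/-- Schur-complement equivalence `H_c ≺ 0 ↔ H̄_c ≺ 0`. -/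
theorem Hc_negdef_iff_Hbarc_negdef
    (nw n nl m : ℕ) (α β σ δ κ τ : ℝ)
    (hα : 0 < α) (hβ : 0 ≤ β) (hσ : 0 < σ) (hδ : 0 < δ)
    (hκ : κ = 1 + 2 * α * β) (hτ : τ = (1 + α * β)⁻¹)
    (C : Matrix (Fin nl) (Fin nw) ℝ) (D : Matrix (Fin nl) (Fin n) ℝ)
    (E : Matrix (Fin m) (Fin nw) ℝ)
    (HPc : Matrix (Fin n ⊕ Fin m) (Fin n ⊕ Fin m) ℝ) (hHPc : HPc.IsSymm)
    (W : Matrix (Fin n ⊕ Fin m) (Fin nw ⊕ Fin n) ℝ)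
    (hW : W = Matrix.fromBlocks 0 1 E 0)
    (HCc : Matrix (Fin nw ⊕ Fin n) (Fin nw ⊕ Fin n) ℝ)
    (hHCc : HCc = Matrix.fromBlocks
      (-(σ • (1 : Matrix (Fin nw) (Fin nw) ℝ)) - β • (Cᵀ * C))
      (-(β • (Cᵀ * D))) (-(β • (Dᵀ * C))) ((τ / (4 * α)) • (Dᵀ * D)))
    (Hc : Matrix (Fin nw ⊕ Fin n) (Fin nw ⊕ Fin n) ℝ)
    (hHc : Hc = HCc + δ • (Wᵀ * HPc * W))
    (HbCc : Matrix ((Fin nw ⊕ Fin n) ⊕ Fin nl) ((Fin nw ⊕ Fin n) ⊕ Fin nl) ℝ)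
    (hHbCc : HbCc = Matrix.fromBlocks
      (Matrix.fromBlocks
        (-(σ • (1 : Matrix (Fin nw) (Fin nw) ℝ)) - (τ * κ * β) • (Cᵀ * C))
        (-((τ * κ * β / 2) • (Cᵀ * D)))
        (-((τ * κ * β / 2) • (Dᵀ * C))) 0)
      (Matrix.fromRows (-((τ * α * β) • Cᵀ)) ((τ / 2) • Dᵀ))
      (Matrix.fromCols (-((τ * α * β) • C)) ((τ / 2) • D))
      (-((τ * α) • (1 : Matrix (Fin nl) (Fin nl) ℝ))))
    (Wb : Matrix (Fin n ⊕ Fin m) ((Fin nw ⊕ Fin n) ⊕ Fin nl) ℝ)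
    (hWb : Wb = Matrix.fromCols W 0)
    (Hbc : Matrix ((Fin nw ⊕ Fin n) ⊕ Fin nl) ((Fin nw ⊕ Fin n) ⊕ Fin nl) ℝ)
    (hHbc : Hbc = HbCc + δ • (Wbᵀ * HPc * Wb)) :
    (-Hc).PosDef ↔ (-Hbc).PosDef := by
  have hαβ : 0 < 1 + α * β := by positivity
  rw [hHc, hHCc, hHbc, hHbCc, hWb, transpose_fromCols_zero_mul_mul, fromBlocks_smul, smul_zero,
    smul_zero, smul_zero]
  simpa only [reducedForm, liftedForm, liftedLeadingBlock, liftedCoupling,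
    conjTranspose_eq_transpose_of_trivial] using
    Hc_negdef_iff_Hbarc_negdef_general hα hαβ hκ hτ σ C D (δ • (Wᵀ * HPc * W))
end

section
/- Fix constants α > 0, β ≥ 0, ζ > 0, σ > 0, Δt > 0 and set κ := 1 + 2αβ, τ := (1 + αβ)^{-1}. Assume f : ℝ^{n_w} → ℝ is differentiable and σ-strongly convex with ∇f(0) = 0; g : ℝ^{n_w} → ℝ^{n_μ} is differentiable with each component g_i convex and g(0) ≤ 0 componentwise; C ∈ ℝ^{n_λ×n_w}, D ∈ ℝ^{n_λ×n}. For w, x, λ and μ ≥ 0 componentwise, γ ∈ (0,1], let η̄ be the step-size base vector, set z := [w; x; λ], φ := ∇f(w) + τκCᵀ(λ + β(Cw + Dx)), and define the discrete updates Δw := −ζΔt(φ + γ∇g(w)(η̄∘μ)), Δμ := ζΔt γ η̄∘[g(w)]_μ^+, Δλ := ζτΔt(−αλ + Cw + Dx). Then with b^I := ⟨η̄∘μ, [g(w)]_μ^+ − ∇g(w)ᵀw⟩ and H̄^C_c := [[−σI − τκβCᵀC, −(τκβ/2)CᵀD, −ταβCᵀ], [−(τκβ/2)DᵀC, O, (τ/2)Dᵀ],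 [−ταβC, (τ/2)D, −ταI]], one has ⟨w, Δw⟩ + ⟨μ, Δμ⟩ + ⟨λ, Δλ⟩ ≤ ζΔt (zᵀ H̄^C_c z + γ b^I). -/
open Matrix

local notation "⟪" x ", " y "⟫" => @inner ℝ _ _ x y

/-- The step-size base vector `η̄` for coefficient `c = ζΔt`, constraint value `gw = g(w)` and
dual variable `μ`. -/
noncomputable def etaBar {p : ℕ} (c : ℝ) (gw μ : Fin p → ℝ) : Fin p → ℝ :=
  fun i => if 0 ≤ μ i + c * pplus gw μ i then 1 else -(μ i) / (c * pplus gw μ i)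

/-!
Pair the updates with `(w, μ, λ)` and divide by `ζΔt`. The multiplier terms give exactly `γ b^I`.
The terms in `Cw`, `Dx`, `λ` give exactly the part of `zᵀ H̄^C_c z` other than `-σ‖w‖²`; the choice
`κ = 1 + 2αβ` is what makes the coefficient of `⟨Cw, λ⟩` come out as `τ - τκ = -2ταβ`. What is left
is `-⟨w, ∇f(w)⟩ ≤ -σ‖w‖²`: the gradient of a `σ`-strongly convex function is `σ`-strongly monotone,
and `∇f(0) = 0`.
-/

section StrongMonotonicity

variable {E : Type*} {s : Set E} {f : E → ℝ} {x y : E}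

theorem apply_sub_le_sub_of_convexOn_of_hasFDerivWithinAt [NormedAddCommGroup E] [NormedSpace ℝ E]
    {f' : E →L[ℝ] ℝ} (hf : ConvexOn ℝ s f) (hx : x ∈ s) (hy : y ∈ s)
    (hf' : HasFDerivWithinAt f f' s x) : f' (y - x) ≤ f y - f x := by
  let ℓ : ℝ →ᵃ[ℝ] E := AffineMap.lineMap x y
  have hℓ : HasDerivWithinAt (f ∘ ℓ) (f' (y - x)) (ℓ ⁻¹' s) 0 := by
    refine HasFDerivWithinAt.comp_hasDerivWithinAt (t := s) 0 ?_
      AffineMap.hasDerivWithinAt_lineMap (Set.mapsTo_preimage ℓ s)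
    simpa [ℓ] using hf'
  have hslope : f' (y - x) ≤ slope (f ∘ ℓ) 0 1 :=
    (hf.comp_affineMap ℓ).le_slope_of_hasDerivWithinAt (by simpa [ℓ] using hx)
      (by simpa [ℓ] using hy) one_pos hℓ
  simpa [slope_def_field, ℓ] using hslope

variable [NormedAddCommGroup E] [InnerProductSpace ℝ E] [CompleteSpace E] {σ : ℝ} {gx gy : E}

theorem inner_add_mul_sq_norm_le_sub_of_strongConvexOn (hf : StrongConvexOn s σ f) (hx : x ∈ s)
    (hy : y ∈ s) (hgx : HasGradientWithinAt f gx s x) :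
    ⟪gx, y - x⟫ + σ / 2 * ‖y - x‖ ^ 2 ≤ f y - f x := by
  have hderiv := hgx.hasFDerivWithinAt.sub
    (((hasStrictFDerivAt_norm_sq x).hasFDerivAt.hasFDerivWithinAt (s := s)).const_mul (σ / 2))
  have hle := apply_sub_le_sub_of_convexOn_of_hasFDerivWithinAt
    (strongConvexOn_iff_convex.mp hf) hx hy hderiv
  have hnorm : ‖y‖ ^ 2 = ‖x‖ ^ 2 + 2 * ⟪x, y - x⟫ + ‖y - x‖ ^ 2 := by
    rw [← norm_add_sq_real, add_sub_cancel]
  simp only [_root_.sub_apply, _root_.smul_apply, InnerProductSpace.toDual_apply_apply,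
    innerSL_apply_apply, smul_eq_mul, nsmul_eq_mul, Nat.cast_ofNat] at hle
  rw [hnorm] at hle
  linarith

theorem mul_sq_norm_sub_le_inner_sub_of_strongConvexOn (hf : StrongConvexOn s σ f) (hx : x ∈ s)
    (hy : y ∈ s) (hgx : HasGradientWithinAt f gx s x) (hgy : HasGradientWithinAt f gy s y) :
    σ * ‖y - x‖ ^ 2 ≤ ⟪gy - gx, y - x⟫ := by
  have hxy := inner_add_mul_sq_norm_le_sub_of_strongConvexOn hf hx hy hgx
  have hyx := inner_add_mul_sq_norm_le_sub_of_strongConvexOn hf hy hx hgy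
  rw [norm_sub_rev, ← neg_sub y x, inner_neg_right] at hyx
  rw [inner_sub_left]
  linarith

end StrongMonotonicity

theorem inner_mv_transpose {m l : Type*} [Fintype m] [Fintype l] (C : Matrix l m ℝ)
    (w : EuclideanSpace ℝ m) (v : EuclideanSpace ℝ l) : ⟪w, mv Cᵀ v⟫ = ⟪mv C w, v⟫ := by
  simp only [EuclideanSpace.inner_eq_star_dotProduct, mv, star_trivial]
  rw [dotProduct_comm, dotProduct_transpose_mulVec, dotProduct_comm]

theorem inner_toLp_mul_sub_inner_sum_smul {ι E : Type*} [Fintype ι] [NormedAddCommGroup E]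
    [InnerProductSpace ℝ E] (η p : ι → ℝ) (μ : EuclideanSpace ℝ ι) (G : ι → E) (w : E) :
    ⟪μ, WithLp.toLp 2 fun i => η i * p i⟫ - ⟪w, ∑ i, (η i * μ i) • G i⟫ =
      ∑ i, (η i * μ i) * (p i - ⟪G i, w⟫) := by
  simp only [PiLp.inner_apply, inner_sum, inner_smul_right, real_inner_comm w,
    ← Finset.sum_sub_distrib]
  refine Finset.sum_congr rfl fun i _ => ?_
  simp only [RCLike.inner_apply, conj_trivial]
  ring

section DissipationMatrix

variable {m n l : Type*} [DecidableEq m] [DecidableEq l]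

/-- The matrix `H̄^C_c` of the dissipation inequality, in block coordinates `[w; x; λ]`. The
relations `κ = 1 + 2αβ` and `τ = (1 + αβ)⁻¹` are not built in. -/
noncomputable def dissipationMatrix [Fintype l] (α β σ κ τ : ℝ) (C : Matrix l m ℝ)
    (D : Matrix l n ℝ) : Matrix ((m ⊕ n) ⊕ l) ((m ⊕ n) ⊕ l) ℝ :=
  fromBlocks
    (fromBlocks
      (-(σ • (1 : Matrix m m ℝ)) - (τ * κ * β) • (Cᵀ * C))
      (-((τ * κ * β / 2) • (Cᵀ * D)))
      (-((τ * κ * β / 2) • (Dᵀ * C))) 0)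
    (fromRows (-((τ * α * β) • Cᵀ)) ((τ / 2) • Dᵀ))
    (fromCols (-((τ * α * β) • C)) ((τ / 2) • D))
    (-((τ * α) • (1 : Matrix l l ℝ)))

variable [Fintype m] [Fintype n] [Fintype l] (C : Matrix l m ℝ) (D : Matrix l n ℝ)
  (w : EuclideanSpace ℝ m) (x : EuclideanSpace ℝ n) (lam : EuclideanSpace ℝ l)

theorem dotProduct_dissipationMatrix_mulVec (α β σ κ τ : ℝ) :
    Sum.elim (Sum.elim w x) lam ⬝ᵥ
        dissipationMatrix α β σ κ τ C D *ᵥ Sum.elim (Sum.elim w x) lam =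
      -σ * ⟪w, w⟫ - τ * κ * β * ⟪mv C w, mv C w⟫ - τ * κ * β * ⟪mv C w, mv D x⟫
        - 2 * (τ * α * β) * ⟪mv C w, lam⟫ + τ * ⟪lam, mv D x⟫ - τ * α * ⟪lam, lam⟫ := by
  simp only [EuclideanSpace.inner_eq_star_dotProduct, mv, star_trivial]
  simp only [dissipationMatrix, fromBlocks_mulVec, fromRows_mulVec, fromCols_mulVec_sumElim,
    sumElim_dotProduct_sumElim, Sum.elim_comp_inl, Sum.elim_comp_inr, dotProduct_add, sub_mulVec,
    neg_mulVec, smul_mulVec, dotProduct_sub, dotProduct_neg, dotProduct_smul, ← mulVec_mulVec,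
    one_mulVec, zero_mulVec, dotProduct_zero, smul_eq_mul, dotProduct_transpose_mulVec,
    ← Sum.elim_add_add]
  rw [dotProduct_comm (D *ᵥ x.ofLp) (C *ᵥ w.ofLp), dotProduct_comm lam.ofLp (C *ᵥ w.ofLp),
    dotProduct_comm lam.ofLp (D *ᵥ x.ofLp)]
  ring

theorem dotProduct_dissipationMatrix_mulVec_eq_inner_updates {α β κ : ℝ}
    (hκ : κ = 1 + 2 * α * β) (σ τ : ℝ) :
    Sum.elim (Sum.elim w x) lam ⬝ᵥ
        dissipationMatrix α β σ κ τ C D *ᵥ Sum.elim (Sum.elim w x) lam =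
      -(σ * ‖w‖ ^ 2) - ⟪w, (τ * κ) • mv Cᵀ (lam + β • (mv C w + mv D x))⟫
        + τ * ⟪lam, (-α) • lam + mv C w + mv D x⟫ := by
  rw [dotProduct_dissipationMatrix_mulVec, ← real_inner_self_eq_norm_sq]
  simp only [inner_smul_right, inner_mv_transpose, inner_add_right, real_inner_comm (mv C w) lam]
  subst hκ
  ring

end DissipationMatrix

theorem discrete_first_order_dissipation_general
    {ι m n l : Type*} [Fintype ι] [Fintype m] [Fintype n] [Fintype l] [DecidableEq m]
    [DecidableEq l] {α β ζ σ Δt κ : ℝ} (hζΔt : 0 ≤ ζ * Δt) (hκ : κ = 1 + 2 * α * β) (γ τ : ℝ)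
    {s : Set (EuclideanSpace ℝ m)} {f : EuclideanSpace ℝ m → ℝ}
    {f' : EuclideanSpace ℝ m → EuclideanSpace ℝ m}
    (hf' : ∀ v ∈ s, HasGradientWithinAt f (f' v) s v) (hf : StrongConvexOn s σ f)
    (h0 : 0 ∈ s) (hf0 : f' 0 = 0) (C : Matrix l m ℝ) (D : Matrix l n ℝ)
    {w : EuclideanSpace ℝ m} (hw : w ∈ s) (x : EuclideanSpace ℝ n) (lam : EuclideanSpace ℝ l)
    (μ : EuclideanSpace ℝ ι) (η p : ι → ℝ) (G : ι → EuclideanSpace ℝ m) :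
    let φ := f' w + (τ * κ) • mv Cᵀ (lam + β • (mv C w + mv D x))
    let Δw := (-(ζ * Δt)) • (φ + γ • ∑ i, (η i * μ i) • G i)
    let Δμ : EuclideanSpace ℝ ι := (ζ * Δt * γ) • WithLp.toLp 2 fun i => η i * p i
    let Δlam := (ζ * τ * Δt) • ((-α) • lam + mv C w + mv D x)
    let bI := ∑ i, (η i * μ i) * (p i - ⟪G i, w⟫)
    ⟪w, Δw⟫ + ⟪μ, Δμ⟫ + ⟪lam, Δlam⟫ ≤
      ζ * Δt * (Sum.elim (Sum.elim w x) lam ⬝ᵥ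
        dissipationMatrix α β σ κ τ C D *ᵥ Sum.elim (Sum.elim w x) lam + γ * bI) := by
  intro φ Δw Δμ Δlam bI
  have hmono : σ * ‖w‖ ^ 2 ≤ ⟪w, f' w⟫ := by
    simpa [hf0, real_inner_comm w] using
      mul_sq_norm_sub_le_inner_sub_of_strongConvexOn hf h0 hw (hf' 0 h0) (hf' w hw)
  have hbI : bI = ⟪μ, WithLp.toLp 2 fun i => η i * p i⟫ - ⟪w, ∑ i, (η i * μ i) • G i⟫ :=
    (inner_toLp_mul_sub_inner_sum_smul η p μ G w).symm
  have hgap : ⟪w, Δw⟫ + ⟪μ, Δμ⟫ + ⟪lam, Δlam⟫ =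
      ζ * Δt * (Sum.elim (Sum.elim w x) lam ⬝ᵥ
        dissipationMatrix α β σ κ τ C D *ᵥ Sum.elim (Sum.elim w x) lam + γ * bI) -
      ζ * Δt * (⟪w, f' w⟫ - σ * ‖w‖ ^ 2) := by
    rw [dotProduct_dissipationMatrix_mulVec_eq_inner_updates C D w x lam hκ, hbI]
    simp only [Δw, Δμ, Δlam, φ, inner_smul_right _ _ (-(ζ * Δt)), inner_smul_right _ _ γ,
      inner_smul_right _ _ (ζ * Δt * γ), inner_smul_right _ _ (ζ * τ * Δt), inner_add_right w]
    ring
  rw [hgap]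
  exact sub_le_self _ (mul_nonneg hζΔt (sub_nonneg.mpr hmono))

/-- first-order part of the discrete dissipation inequality:
`⟨w, Δw⟩ + ⟨μ, Δμ⟩ + ⟨λ, Δλ⟩ ≤ ζΔt (zᵀ H̄^C_c z + γ b^I)`. -/
theorem discrete_first_order_dissipation
    (nw n nμ nl : ℕ) (α β ζ σ Δt γ κ τ : ℝ)
    (hα : 0 < α) (hβ : 0 ≤ β) (hζ : 0 < ζ) (hσ : 0 < σ) (hΔt : 0 < Δt)
    (hγ0 : 0 < γ) (hγ1 : γ ≤ 1)
    (hκ : κ = 1 + 2 * α * β) (hτ : τ = (1 + α * β)⁻¹)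
    (f : EuclideanSpace ℝ (Fin nw) → ℝ)
    (f' : EuclideanSpace ℝ (Fin nw) → EuclideanSpace ℝ (Fin nw))
    (hfdiff : ∀ v, HasGradientAt f (f' v) v)
    (hfsc : ConvexOn ℝ Set.univ (fun v => f v - σ / 2 * ‖v‖ ^ 2))
    (hf0 : f' 0 = 0)
    (g : EuclideanSpace ℝ (Fin nw) → Fin nμ → ℝ)
    (g' : EuclideanSpace ℝ (Fin nw) → Fin nμ → EuclideanSpace ℝ (Fin nw))
    (hgdiff : ∀ v i, HasGradientAt (fun u => g u i) (g' v i) v)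
    (hgconv : ∀ i, ConvexOn ℝ Set.univ fun v => g v i)
    (hg0 : ∀ i, g 0 i ≤ 0)
    (C : Matrix (Fin nl) (Fin nw) ℝ) (D : Matrix (Fin nl) (Fin n) ℝ)
    (HbCc : Matrix ((Fin nw ⊕ Fin n) ⊕ Fin nl) ((Fin nw ⊕ Fin n) ⊕ Fin nl) ℝ)
    (hHbCc : HbCc = Matrix.fromBlocks
      (Matrix.fromBlocks
        (-(σ • (1 : Matrix (Fin nw) (Fin nw) ℝ)) - (τ * κ * β) • (Cᵀ * C))
        (-((τ * κ * β / 2) • (Cᵀ * D)))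
        (-((τ * κ * β / 2) • (Dᵀ * C))) 0)
      (Matrix.fromRows (-((τ * α * β) • Cᵀ)) ((τ / 2) • Dᵀ))
      (Matrix.fromCols (-((τ * α * β) • C)) ((τ / 2) • D))
      (-((τ * α) • (1 : Matrix (Fin nl) (Fin nl) ℝ)))) :
    ∀ (w : EuclideanSpace ℝ (Fin nw)) (x : EuclideanSpace ℝ (Fin n))
      (lam : EuclideanSpace ℝ (Fin nl)) (μ : EuclideanSpace ℝ (Fin nμ)),
      (∀ i, 0 ≤ μ i) →
      let ηb : Fin nμ → ℝ := etaBar (ζ * Δt) (g w) μ;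
      let φ : EuclideanSpace ℝ (Fin nw) :=
        f' w + (τ * κ) • mv Cᵀ (lam + β • (mv C w + mv D x));
      let Δw : EuclideanSpace ℝ (Fin nw) :=
        (-(ζ * Δt)) • (φ + γ • ∑ i, (ηb i * μ i) • g' w i);
      let Δμ : EuclideanSpace ℝ (Fin nμ) :=
        (ζ * Δt * γ) • (WithLp.toLp 2 (fun i => ηb i * pplus (g w) μ i) : EuclideanSpace ℝ (Fin nμ));
      let Δlam : EuclideanSpace ℝ (Fin nl) :=
        (ζ * τ * Δt) • ((-α) • lam + mv C w + mv D x);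
      let bI : ℝ := ∑ i, (ηb i * μ i) * (pplus (g w) μ i - ⟪g' w i, w⟫);
      ⟪w, Δw⟫ + ⟪μ, Δμ⟫ + ⟪lam, Δlam⟫ ≤
        ζ * Δt * (Sum.elim (Sum.elim w x) lam ⬝ᵥ
          HbCc.mulVec (Sum.elim (Sum.elim w x) lam) + γ * bI) := by
  intro w x lam μ _
  subst hHbCc
  exact discrete_first_order_dissipation_general (mul_pos hζ hΔt).le hκ γ τ
    (fun v _ => (hfdiff v).hasFDerivAt.hasFDerivWithinAt) (strongConvexOn_iff_convex.mpr hfsc)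
    (Set.mem_univ 0) hf0 C D (Set.mem_univ w) x lam μ _ _ (g' w)
end

section
/- Let ζ > 0, Δt > 0 and g : ℝ^{n_w} → ℝ^{n_μ} with g(0) < 0 componentwise. Let μ ∈ ℝ^{n_μ} with μ ≥ 0 componentwise and μ ≠ 0, and let η̄ be the step-size base vector evaluated at w = 0 (i.e., η̄_i := 1 if μ_i + ζΔt([g(0)]_μ^+)_i ≥ 0, and η̄_i := −μ_i/(ζΔt([g(0)]_μ^+)_i) otherwise). Then ⟨η̄∘μ, [g(0)]_μ^+⟩ < 0. -/
open Matrix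

local notation "⟪" x ", " y "⟫" => @inner ℝ _ _ x y

section

variable {p : ℕ} {a b μ : Fin p → ℝ} {i : Fin p}

theorem pplus_of_pos (hb : 0 < b i) : pplus a b i = a i :=
  if_pos hb

theorem pplus_eq_zero (hb : b i ≤ 0) (ha : a i ≤ 0) : pplus a b i = 0 :=
  (if_neg hb.not_gt).trans (max_eq_left ha)

-- The second branch of `etaBar` is taken only when `c * pplus a μ i < -μ i < 0`, so its quotient
-- is positive whatever the sign of `c`.
theorem etaBar_pos (c : ℝ) (hμ : 0 < μ i) : 0 < etaBar c a μ i := by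
  unfold etaBar
  split_ifs with h
  · exact one_pos
  · have hstep : c * pplus a μ i < 0 := by linarith
    exact div_pos_of_neg_of_neg (neg_neg_of_pos hμ) hstep

theorem etaBar_mul_mul_pplus_neg (c : ℝ) (hμ : 0 < μ i) (ha : a i < 0) :
    etaBar c a μ i * μ i * pplus a μ i < 0 := by
  rw [pplus_of_pos hμ]
  exact mul_neg_of_pos_of_neg (mul_pos (etaBar_pos c hμ) hμ) ha

theorem etaBar_mul_mul_pplus_nonpos (c : ℝ) (ha : μ i ≠ 0 → a i ≤ 0) :
    etaBar c a μ i * μ i * pplus a μ i ≤ 0 := by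
  rcases lt_trichotomy (μ i) 0 with hneg | hzero | hpos
  · rw [pplus_eq_zero hneg.le (ha hneg.ne), mul_zero]
  · rw [hzero, mul_zero, zero_mul]
  · rw [pplus_of_pos hpos]
    exact mul_nonpos_of_nonneg_of_nonpos (mul_pos (etaBar_pos c hpos) hpos).le (ha hpos.ne')

theorem etaBar_inner_neg_general (c : ℝ) (hle : ∀ i, μ i ≠ 0 → a i ≤ 0)
    (hlt : ∃ i, 0 < μ i ∧ a i < 0) :
    ∑ i, etaBar c a μ i * μ i * pplus a μ i < 0 := by
  obtain ⟨j, hμj, haj⟩ := hlt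
  exact Finset.sum_neg' (fun i _ => etaBar_mul_mul_pplus_nonpos c (hle i))
    ⟨j, Finset.mem_univ j, etaBar_mul_mul_pplus_neg c hμj haj⟩

end

/-- for `g(0) < 0`, `μ ≥ 0`, `μ ≠ 0`, the step-size base vector at `w = 0`
satisfies `⟨η̄∘μ, [g(0)]_μ^+⟩ < 0`. -/
theorem etaBar_inner_neg
    (nw nμ : ℕ) (ζ Δt : ℝ) (hζ : 0 < ζ) (hΔt : 0 < Δt)
    (g : EuclideanSpace ℝ (Fin nw) → Fin nμ → ℝ)
    (hg0 : ∀ i, g 0 i < 0)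
    (μ : EuclideanSpace ℝ (Fin nμ)) (hμ : ∀ i, 0 ≤ μ i) (hμ0 : μ ≠ 0) :
    ∑ i, (etaBar (ζ * Δt) (g 0) μ i * μ i) * pplus (g 0) μ i < 0 := by
  obtain ⟨i, hi⟩ : ∃ i, μ i ≠ 0 := by simpa [PiLp.ext_iff] using hμ0
  exact etaBar_inner_neg_general _ (fun i _ => (hg0 i).le) ⟨i, (hμ i).lt_of_ne' hi, hg0 i⟩
end

section
/- Fix constants α > 0, β ≥ 0, ζ > 0, σ > 0, ρ ≥ σ, Δt > 0, δ > 0 and set κ := 1 + 2αβ, τ := (1 + αβ)^{-1}. Assume: f : ℝ^{n_w} → ℝ is differentiable, σ-strongly convex, ρ-smooth, with ∇f(0) = 0; g : ℝ^{n_w} → ℝ^{n_μ} is differentiable with each component g_i convex and g(0) < 0 componentwise; C ∈ ℝ^{n_λ×n_w}, D ∈ ℝ^{n_λ×n}, E ∈ ℝ^{m×n_w}; A_d ∈ ℝ^{n×n}, B_d ∈ ℝ^{n×m}, and there are a symmetric matrix H^P_d with negative definite upper-left n×n block and a positive semidefinite matrix P^P_d such that (1/2)‖A_d x + B_d u‖²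 − (1/2)‖x‖² ≤ Δt [x; u]ᵀ(H^P_d + Δt P^P_d)[x; u] for all x, u. Define H̄^C_c := [[−σI − τκβCᵀC, −(τκβ/2)CᵀD, −ταβCᵀ], [−(τκβ/2)DᵀC, O, (τ/2)Dᵀ], [−ταβC, (τ/2)D, −ταI]], X := τκ Cᵀ[βC βD I], P̄ := (ρ² + 2ρ‖X‖)I + XᵀX, P̄^C_d := (1/2)(P̄ + τ²[C D −αI]ᵀ[C D −αI]), W̄ := [[O, I, O], [E, O, O]] (so W̄[w; x; λ] = [x; Ew]), and suppose H̄_d := H̄^C_c + ζΔt P̄^C_d + δW̄ᵀ(H^P_d + Δt P^P_d)W̄ ≺ 0. Define V(w, μ, λ, x) := (1/2)(‖w‖² + ‖μ‖² + ‖λ‖²) + δζ(1/2)‖x‖², and for γ ∈ (0,1] the one-step closed-loop update: w⁺ := w − ζΔt(∇f(w) + γ∇g(w)(η̄∘μ) + τκCᵀ(λ + β(Cw + Dx))), μ⁺ := μ + ζΔt γ η̄∘[g(w)]_μ^+, λ⁺ := λ + ζτΔt(−αλ + Cw + Dx), x⁺ := A_d x + B_d E w, where η̄ is the step-size base vector.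 Then for every (w, μ, λ, x) with μ ≥ 0 componentwise: if (w, μ, λ, x) ≠ (0, 0, 0, 0), there exists γ̄ ∈ (0, 1] such that V(w⁺, μ⁺, λ⁺, x⁺) − V(w, μ, λ, x) < 0 for all γ ∈ (0, γ̄); and if (w, μ, λ, x) = (0, 0, 0, 0), then V(w⁺, μ⁺, λ⁺, x⁺) − V(w, μ, λ, x) = 0 for every γ ∈ (0, 1]. -/
open Matrix

local notation "⟪" x ", " y "⟫" => @inner ℝ _ _ x y

/-- Operator norm of a matrix, induced by the Euclidean norms. -/
noncomputable def opNorm {α β : Type*} [Fintype α] [Fintype β] [DecidableEq β]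
    (M : Matrix α β ℝ) : ℝ :=
  ‖LinearMap.toContinuousLinearMap (Matrix.toEuclideanLin M)‖

/-! At `γ = 0` the primal–dual update is an Euler step of the linear feedback loop, perturbed only
by the gradient of `f`. Expanding the squares and bounding the gradient terms by strong
monotonicity and linear growth, the change of the Lyapunov function is at most `ζΔt` times the
quadratic form of `H̄_d`, hence negative as soon as `(w, λ, x) ≠ 0`; continuity in `γ` preserves
this for small `γ`. If `(w, λ, x) = 0` but `μ ≠ 0`, the change vanishes at `γ = 0`, and its
first-order coefficient `ζΔt⟪μ, η̄ ∘ [g(0)]_μ^+⟫` is negative because `g(0) < 0` and `μ ≥ 0`. -/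

section Convex

theorem hasFDerivAt_monotone_of_convexOn {F : Type*} [NormedAddCommGroup F] [NormedSpace ℝ F]
    {s : Set F} {h : F → ℝ} (hh : ConvexOn ℝ s h) {x y : F} (hxs : x ∈ s) (hys : y ∈ s)
    {hx' hy' : F →L[ℝ] ℝ} (hx : HasFDerivAt h hx' x) (hy : HasFDerivAt h hy' y) :
    hx' (y - x) ≤ hy' (y - x) := by
  let line : ℝ →ᵃ[ℝ] F := AffineMap.lineMap x y
  have hconv : ConvexOn ℝ (line ⁻¹' s) (h ∘ line) := hh.comp_affineMap line
  have hline (t : ℝ) : HasDerivAt line (y - x) t := AffineMap.hasDerivAt_lineMap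
  have h0 : HasDerivAt (h ∘ line) (hx' (y - x)) 0 :=
    HasFDerivAt.comp_hasDerivAt 0 (by simpa [line] using hx) (hline 0)
  have h1 : HasDerivAt (h ∘ line) (hy' (y - x)) 1 :=
    HasFDerivAt.comp_hasDerivAt 1 (by simpa [line] using hy) (hline 1)
  have mem0 : (0 : ℝ) ∈ line ⁻¹' s := by simpa [line] using hxs
  have mem1 : (1 : ℝ) ∈ line ⁻¹' s := by simpa [line] using hys
  exact (hconv.le_slope_of_hasDerivAt mem0 mem1 one_pos h0).trans
    (hconv.slope_le_of_hasDerivAt mem0 mem1 one_pos h1)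

theorem mul_norm_sub_sq_le_inner_gradient_sub {F : Type*} [NormedAddCommGroup F]
    [InnerProductSpace ℝ F] [CompleteSpace F] {s : Set F} {σ : ℝ} {f : F → ℝ}
    (hf : StrongConvexOn s σ f) {x y fx' fy' : F} (hxs : x ∈ s) (hys : y ∈ s)
    (hx : HasGradientAt f fx' x) (hy : HasGradientAt f fy' y) :
    σ * ‖y - x‖ ^ 2 ≤ ⟪y - x, fy' - fx'⟫ := by
  have hsq (v : F) : HasFDerivAt (fun u : F => σ / 2 * ‖u‖ ^ 2) ((σ / 2) • (2 • innerSL ℝ v)) v :=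
    (hasStrictFDerivAt_norm_sq v).hasFDerivAt.const_mul (σ / 2)
  have hmono := hasFDerivAt_monotone_of_convexOn (strongConvexOn_iff_convex.1 hf) hxs hys
    (hx.hasFDerivAt.sub (hsq x)) (hy.hasFDerivAt.sub (hsq y))
  simp only [_root_.sub_apply, _root_.smul_apply,
    InnerProductSpace.toDual_apply_apply, innerSL_apply_apply, smul_eq_mul, nsmul_eq_mul,
    Nat.cast_ofNat] at hmono
  have hnorm : ‖y - x‖ ^ 2 = ⟪y, y - x⟫ - ⟪x, y - x⟫ := by
    rw [← inner_sub_left, real_inner_self_eq_norm_sq]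
  rw [real_inner_comm, inner_sub_left, hnorm]
  linarith

end Convex

section InnerProduct

variable {F : Type*} [NormedAddCommGroup F] [InnerProductSpace ℝ F]

theorem norm_add_smul_sq (a b : F) (t : ℝ) :
    ‖a + t • b‖ ^ 2 = ‖a‖ ^ 2 + 2 * t * ⟪a, b⟫ + t ^ 2 * ‖b‖ ^ 2 := by
  rw [norm_add_sq_real, norm_smul, inner_smul_right, mul_pow, Real.norm_eq_abs, sq_abs]
  ring

theorem norm_add_sq_le_of_norm_le_mul {a b : F} {p q r : ℝ} (ha : ‖a‖ ≤ p * r)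
    (hb : ‖b‖ ≤ q * r) : ‖a + b‖ ^ 2 ≤ (p ^ 2 + 2 * p * q) * r ^ 2 + ‖b‖ ^ 2 := by
  have hpr : 0 ≤ p * r := (norm_nonneg a).trans ha
  have hab : ⟪a, b⟫ ≤ (p * r) * (q * r) :=
    (real_inner_le_norm a b).trans (mul_le_mul ha hb (norm_nonneg b) hpr)
  have haa : ‖a‖ ^ 2 ≤ (p * r) ^ 2 := pow_le_pow_left₀ (norm_nonneg a) ha 2
  rw [norm_add_sq_real]
  linarith

end InnerProduct

section MatrixVector

variable {ι ι' : Type*} [Fintype ι] [Fintype ι']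

theorem inner_eq_dotProduct (a b : EuclideanSpace ℝ ι) : ⟪a, b⟫ = a.ofLp ⬝ᵥ b.ofLp := by
  rw [EuclideanSpace.inner_eq_star_dotProduct, dotProduct_comm, star_trivial]

theorem norm_sq_eq_dotProduct (a : EuclideanSpace ℝ ι) : ‖a‖ ^ 2 = a.ofLp ⬝ᵥ a.ofLp := by
  rw [← inner_eq_dotProduct, real_inner_self_eq_norm_sq]

theorem mv_zero {ι : Type*} (M : Matrix ι ι' ℝ) : mv M 0 = 0 := by
  simp [mv]

theorem inner_mv_transpose_s14 (M : Matrix ι ι' ℝ) (a : EuclideanSpace ℝ ι')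
    (b : EuclideanSpace ℝ ι) : ⟪a, mv Mᵀ b⟫ = ⟪mv M a, b⟫ := by
  rw [inner_eq_dotProduct, inner_eq_dotProduct, mv, mv, dotProduct_mulVec, vecMul_transpose]

theorem norm_mv_le [DecidableEq ι'] (M : Matrix ι ι' ℝ) (v : EuclideanSpace ℝ ι') :
    ‖mv M v‖ ≤ opNorm M * ‖v‖ :=
  (LinearMap.toContinuousLinearMap (toEuclideanLin M)).le_opNorm v

theorem dotProduct_congruence_mulVec (M : Matrix ι ι' ℝ) (S : Matrix ι ι ℝ) (v : ι' → ℝ) :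
    v ⬝ᵥ (Mᵀ * S * M) *ᵥ v = M *ᵥ v ⬝ᵥ S *ᵥ M *ᵥ v := by
  rw [← mulVec_mulVec, ← mulVec_mulVec, dotProduct_mulVec, vecMul_transpose]

theorem dotProduct_transpose_mul_self_mulVec (M : Matrix ι ι' ℝ) (v : EuclideanSpace ℝ ι') :
    v.ofLp ⬝ᵥ (Mᵀ * M) *ᵥ v.ofLp = ‖mv M v‖ ^ 2 := by
  rw [← mulVec_mulVec, dotProduct_mulVec, vecMul_transpose, norm_sq_eq_dotProduct, mv]

end MatrixVector

section Stack

variable {ιw ιx ιl : Type*}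

/-- The stacked vector `[w; x; λ]`. -/
noncomputable def stack (w : EuclideanSpace ℝ ιw) (x : EuclideanSpace ℝ ιx)
    (l : EuclideanSpace ℝ ιl) : EuclideanSpace ℝ ((ιw ⊕ ιx) ⊕ ιl) :=
  WithLp.toLp 2 (Sum.elim (Sum.elim w x) l)

theorem stack_eq_zero_iff {w : EuclideanSpace ℝ ιw} {x : EuclideanSpace ℝ ιx}
    {l : EuclideanSpace ℝ ιl} : stack w x l = 0 ↔ w = 0 ∧ l = 0 ∧ x = 0 := by
  simp only [stack, PiLp.ext_iff, Sum.forall, Sum.elim_inl, Sum.elim_inr, PiLp.zero_apply]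
  tauto

theorem norm_le_norm_stack [Fintype ιw] [Fintype ιx] [Fintype ιl] (w : EuclideanSpace ℝ ιw)
    (x : EuclideanSpace ℝ ιx) (l : EuclideanSpace ℝ ιl) : ‖w‖ ≤ ‖stack w x l‖ := by
  have hsq : ‖stack w x l‖ ^ 2 = ‖w‖ ^ 2 + ‖x‖ ^ 2 + ‖l‖ ^ 2 := by
    simp only [norm_sq_eq_dotProduct, stack, sumElim_dotProduct_sumElim]
  refine le_of_sq_le_sq ?_ (norm_nonneg _)
  rw [hsq, add_assoc]
  exact le_add_of_nonneg_right (by positivity)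

end Stack

section ClosedLoopMatrix

variable {ιw ιx ιu ιl : Type*} [Fintype ιw] [Fintype ιx] [Fintype ιl]

/-- The feedback term `τκCᵀ(λ + β(Cw + Dx))` of the primal update. -/
noncomputable def coupling (τ κ β : ℝ) (C : Matrix ιl ιw ℝ) (D : Matrix ιl ιx ℝ)
    (w : EuclideanSpace ℝ ιw) (x : EuclideanSpace ℝ ιx) (l : EuclideanSpace ℝ ιl) :
    EuclideanSpace ℝ ιw :=
  (τ * κ) • mv Cᵀ (l + β • (mv C w + mv D x))

/-- The direction `−αλ + Cw + Dx` of the update of the multiplier `λ`. -/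
noncomputable def leakyResidual (α : ℝ) (C : Matrix ιl ιw ℝ) (D : Matrix ιl ιx ℝ)
    (w : EuclideanSpace ℝ ιw) (x : EuclideanSpace ℝ ιx) (l : EuclideanSpace ℝ ιl) :
    EuclideanSpace ℝ ιl :=
  (-α) • l + mv C w + mv D x

/-- The matrix `X = τκCᵀ[βC  βD  I]` of `coupling` on stacked vectors. -/
def couplingMatrix [DecidableEq ιl] (τ κ β : ℝ) (C : Matrix ιl ιw ℝ) (D : Matrix ιl ιx ℝ) :
    Matrix ιw ((ιw ⊕ ιx) ⊕ ιl) ℝ :=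
  (τ * κ) • (Cᵀ * fromCols (fromCols (β • C) (β • D)) (1 : Matrix ιl ιl ℝ))

/-- The matrix `[C  D  −αI]` of `leakyResidual` on stacked vectors. -/
def leakyResidualMatrix [DecidableEq ιl] (α : ℝ) (C : Matrix ιl ιw ℝ) (D : Matrix ιl ιx ℝ) :
    Matrix ιl ((ιw ⊕ ιx) ⊕ ιl) ℝ :=
  fromCols (fromCols C D) (-(α • (1 : Matrix ιl ιl ℝ)))

/-- The matrix `W̄`, which sends the stacked vector `[w; x; λ]` to the plant variables `[x; Ew]`. -/
def plantMatrix (ιx ιl : Type*) [DecidableEq ιx] (E : Matrix ιu ιw ℝ) :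
    Matrix (ιx ⊕ ιu) ((ιw ⊕ ιx) ⊕ ιl) ℝ :=
  fromCols (fromBlocks 0 1 E 0) 0

/-- The matrix `H̄^C_c`, the supply rate of the controller in continuous time. -/
noncomputable def controllerMatrix [DecidableEq ιw] [DecidableEq ιl] (σ α β τ κ : ℝ)
    (C : Matrix ιl ιw ℝ) (D : Matrix ιl ιx ℝ) :
    Matrix ((ιw ⊕ ιx) ⊕ ιl) ((ιw ⊕ ιx) ⊕ ιl) ℝ :=
  fromBlocks
    (fromBlocks
      (-(σ • (1 : Matrix ιw ιw ℝ)) - (τ * κ * β) • (Cᵀ * C))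
      (-((τ * κ * β / 2) • (Cᵀ * D)))
      (-((τ * κ * β / 2) • (Dᵀ * C))) 0)
    (fromRows (-((τ * α * β) • Cᵀ)) ((τ / 2) • Dᵀ))
    (fromCols (-((τ * α * β) • C)) ((τ / 2) • D))
    (-((τ * α) • (1 : Matrix ιl ιl ℝ)))

/-- The matrix `P̄^C_d`, which bounds the second-order error of the Euler discretization of the
controller. -/
noncomputable def discretizationMatrix [DecidableEq ιw] [DecidableEq ιx] [DecidableEq ιl]
    (ρ α β τ κ : ℝ) (C : Matrix ιl ιw ℝ) (D : Matrix ιl ιx ℝ) :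
    Matrix ((ιw ⊕ ιx) ⊕ ιl) ((ιw ⊕ ιx) ⊕ ιl) ℝ :=
  let X := couplingMatrix τ κ β C D
  let R := leakyResidualMatrix α C D
  (1 / 2 : ℝ) • ((ρ ^ 2 + 2 * ρ * opNorm X) • 1 + Xᵀ * X + τ ^ 2 • (Rᵀ * R))

/-- The matrix `H̄_d = H̄^C_c + c P̄^C_d + δ W̄ᵀSW̄`, with controller step `c = ζΔt` and supply rate
`S = H^P_d + Δt P^P_d` of the plant. -/
noncomputable def closedLoopMatrix [Fintype ιu] [DecidableEq ιw] [DecidableEq ιx] [DecidableEq ιl]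
    (σ ρ α β τ κ c δ : ℝ) (C : Matrix ιl ιw ℝ) (D : Matrix ιl ιx ℝ) (E : Matrix ιu ιw ℝ)
    (S : Matrix (ιx ⊕ ιu) (ιx ⊕ ιu) ℝ) : Matrix ((ιw ⊕ ιx) ⊕ ιl) ((ιw ⊕ ιx) ⊕ ιl) ℝ :=
  controllerMatrix σ α β τ κ C D + c • discretizationMatrix ρ α β τ κ C D +
    δ • ((plantMatrix ιx ιl E)ᵀ * S * plantMatrix ιx ιl E)

theorem mv_couplingMatrix_stack [DecidableEq ιl] (τ κ β : ℝ) (C : Matrix ιl ιw ℝ)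
    (D : Matrix ιl ιx ℝ) (w : EuclideanSpace ℝ ιw) (x : EuclideanSpace ℝ ιx)
    (l : EuclideanSpace ℝ ιl) :
    mv (couplingMatrix τ κ β C D) (stack w x l) = coupling τ κ β C D w x l := by
  have hinner : fromCols (fromCols (β • C) (β • D)) (1 : Matrix ιl ιl ℝ) *ᵥ (stack w x l).ofLp =
      (l + β • (mv C w + mv D x)).ofLp := by
    simp only [stack, mv, fromCols_mulVec_sumElim, smul_mulVec, one_mulVec, WithLp.ofLp_add,
      WithLp.ofLp_smul, smul_add]
    abel
  rw [couplingMatrix, coupling, mv, smul_mulVec, ← mulVec_mulVec, hinner, WithLp.toLp_smul]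
  rfl

theorem mv_leakyResidualMatrix_stack [DecidableEq ιl] (α : ℝ) (C : Matrix ιl ιw ℝ)
    (D : Matrix ιl ιx ℝ) (w : EuclideanSpace ℝ ιw) (x : EuclideanSpace ℝ ιx)
    (l : EuclideanSpace ℝ ιl) :
    mv (leakyResidualMatrix α C D) (stack w x l) = leakyResidual α C D w x l := by
  simp only [leakyResidualMatrix, leakyResidual, mv, stack, fromCols_mulVec_sumElim,
    neg_mulVec, smul_mulVec, one_mulVec, WithLp.toLp_add, WithLp.toLp_neg, WithLp.toLp_smul,
    WithLp.toLp_ofLp, neg_smul]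
  abel

theorem plantMatrix_mulVec_stack [DecidableEq ιx] (E : Matrix ιu ιw ℝ) (w : EuclideanSpace ℝ ιw)
    (x : EuclideanSpace ℝ ιx) (l : EuclideanSpace ℝ ιl) :
    plantMatrix ιx ιl E *ᵥ (stack w x l).ofLp = Sum.elim x (mv E w) := by
  simp [plantMatrix, stack, mv, fromBlocks_mulVec]

/-- The cross terms `⟪Cw, λ⟫` of the two inner products combine through `1 - κ = -2αβ`. -/
theorem dotProduct_controllerMatrix_mulVec_stack [DecidableEq ιw] [DecidableEq ιl]
    {σ α β τ κ : ℝ} (hκ : κ = 1 + 2 * α * β) (C : Matrix ιl ιw ℝ) (D : Matrix ιl ιx ℝ)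
    (w : EuclideanSpace ℝ ιw) (x : EuclideanSpace ℝ ιx) (l : EuclideanSpace ℝ ιl) :
    (stack w x l).ofLp ⬝ᵥ controllerMatrix σ α β τ κ C D *ᵥ (stack w x l).ofLp =
      -σ * ‖w‖ ^ 2 - ⟪w, coupling τ κ β C D w x l⟫ + τ * ⟪l, leakyResidual α C D w x l⟫ := by
  have hcoupling : ⟪w, coupling τ κ β C D w x l⟫ =
      τ * κ * (⟪mv C w, l⟫ + β * (‖mv C w‖ ^ 2 + ⟪mv C w, mv D x⟫)) := by
    rw [coupling, inner_smul_right, inner_mv_transpose_s14, inner_add_right, inner_smul_right,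
      inner_add_right, real_inner_self_eq_norm_sq]
  have hresidual : ⟪l, leakyResidual α C D w x l⟫ =
      -α * ‖l‖ ^ 2 + ⟪mv C w, l⟫ + ⟪mv D x, l⟫ := by
    rw [leakyResidual, inner_add_right, inner_add_right, inner_smul_right,
      real_inner_self_eq_norm_sq, real_inner_comm l, real_inner_comm l]
  rw [hcoupling, hresidual, hκ]
  simp only [controllerMatrix, stack, norm_sq_eq_dotProduct, inner_eq_dotProduct, mv,
    fromBlocks_mulVec, fromRows_mulVec, fromCols_mulVec, sumElim_dotProduct_sumElim,
    Function.comp_def, Sum.elim_inl, Sum.elim_inr, Sum.elim_add_add, sub_mulVec, neg_mulVec,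
    smul_mulVec, zero_mulVec, one_mulVec, ← mulVec_mulVec, dotProduct_add, dotProduct_sub,
    dotProduct_neg, dotProduct_smul, dotProduct_zero, smul_eq_mul,
    dotProduct_transpose_mulVec]
  rw [dotProduct_comm (C *ᵥ w.ofLp) l.ofLp, dotProduct_comm (D *ᵥ x.ofLp) l.ofLp,
    dotProduct_comm (D *ᵥ x.ofLp) (C *ᵥ w.ofLp)]
  ring

theorem dotProduct_discretizationMatrix_mulVec_stack [DecidableEq ιw] [DecidableEq ιx]
    [DecidableEq ιl] (ρ α β τ κ : ℝ) (C : Matrix ιl ιw ℝ) (D : Matrix ιl ιx ℝ)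
    (w : EuclideanSpace ℝ ιw) (x : EuclideanSpace ℝ ιx) (l : EuclideanSpace ℝ ιl) :
    (stack w x l).ofLp ⬝ᵥ discretizationMatrix ρ α β τ κ C D *ᵥ (stack w x l).ofLp =
      1 / 2 * ((ρ ^ 2 + 2 * ρ * opNorm (couplingMatrix τ κ β C D)) * ‖stack w x l‖ ^ 2 +
        ‖coupling τ κ β C D w x l‖ ^ 2 + τ ^ 2 * ‖leakyResidual α C D w x l‖ ^ 2) := by
  simp only [discretizationMatrix, smul_mulVec, add_mulVec, one_mulVec, dotProduct_add,
    dotProduct_smul, smul_eq_mul, dotProduct_transpose_mul_self_mulVec, mv_couplingMatrix_stack,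
    mv_leakyResidualMatrix_stack, norm_sq_eq_dotProduct (stack w x l)]

theorem norm_add_coupling_sq_add_le_dotProduct_discretizationMatrix_mulVec [DecidableEq ιw]
    [DecidableEq ιx] [DecidableEq ιl] {ρ : ℝ} (hρ : 0 ≤ ρ) (α β τ κ : ℝ) (C : Matrix ιl ιw ℝ)
    (D : Matrix ιl ιx ℝ) {w v : EuclideanSpace ℝ ιw} (hv : ‖v‖ ≤ ρ * ‖w‖)
    (x : EuclideanSpace ℝ ιx) (l : EuclideanSpace ℝ ιl) :
    1 / 2 * (‖v + coupling τ κ β C D w x l‖ ^ 2 + τ ^ 2 * ‖leakyResidual α C D w x l‖ ^ 2) ≤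
      (stack w x l).ofLp ⬝ᵥ discretizationMatrix ρ α β τ κ C D *ᵥ (stack w x l).ofLp := by
  rw [dotProduct_discretizationMatrix_mulVec_stack]
  gcongr
  refine norm_add_sq_le_of_norm_le_mul (hv.trans ?_) ?_
  · gcongr
    exact norm_le_norm_stack w x l
  · rw [← mv_couplingMatrix_stack]
    exact norm_mv_le _ _

end ClosedLoopMatrix

section Threshold

open Filter Topology

theorem exists_threshold_of_eventually_nhdsGT {P : ℝ → Prop} (hP : ∀ᶠ γ in 𝓝[>] 0, P γ) :
    ∃ γbar : ℝ, 0 < γbar ∧ γbar ≤ 1 ∧ ∀ γ : ℝ, 0 < γ → γ < γbar → P γ := by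
  obtain ⟨γbar, ⟨hpos, hle⟩, hsub⟩ :=
    (mem_nhdsGT_iff_exists_mem_Ioc_Ioo_subset (zero_lt_one' ℝ)).1 hP
  exact ⟨γbar, hpos, hle, fun γ h0 h1 => hsub ⟨h0, h1⟩⟩

theorem eventually_neg_of_continuous {h : ℝ → ℝ} (hh : Continuous h) (h0 : h 0 < 0) :
    ∀ᶠ γ in 𝓝[>] 0, h γ < 0 :=
  (hh.continuousAt.eventually_lt_const h0).filter_mono nhdsWithin_le_nhds

end Threshold

section Lyapunov

/-- The function `V(w, μ, λ, x) = ½(‖w‖² + ‖μ‖² + ‖λ‖²) + ½ε‖x‖²`, with weight `ε = δζ` on the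
storage of the plant. -/
noncomputable def lyapunov {W M L Y : Type*} [Norm W] [Norm M] [Norm L] [Norm Y] (ε : ℝ)
    (w : W) (μ : M) (l : L) (x : Y) : ℝ :=
  (1 / 2) * (‖w‖ ^ 2 + ‖μ‖ ^ 2 + ‖l‖ ^ 2) + ε * ((1 / 2) * ‖x‖ ^ 2)

theorem lyapunov_nominal_step_sub_le {ιw ιx ιu ιl M : Type*} [Fintype ιw] [Fintype ιx] [Fintype ιu]
    [Fintype ιl] [DecidableEq ιw] [DecidableEq ιx] [DecidableEq ιl] [Norm M]
    {σ ρ α β τ κ ζ Δt δ : ℝ} (hκ : κ = 1 + 2 * α * β) (hρ : 0 ≤ ρ) (hζ : 0 ≤ ζ) (hΔt : 0 ≤ Δt)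
    (hδ : 0 ≤ δ) (C : Matrix ιl ιw ℝ) (D : Matrix ιl ιx ℝ) (E : Matrix ιu ιw ℝ)
    (S : Matrix (ιx ⊕ ιu) (ιx ⊕ ιu) ℝ) {w v : EuclideanSpace ℝ ιw}
    (hmono : σ * ‖w‖ ^ 2 ≤ ⟪w, v⟫) (hgrowth : ‖v‖ ≤ ρ * ‖w‖) {x x' : EuclideanSpace ℝ ιx}
    (hplant : (1 / 2) * ‖x'‖ ^ 2 - (1 / 2) * ‖x‖ ^ 2 ≤
      Δt * (Sum.elim x (mv E w) ⬝ᵥ S *ᵥ Sum.elim x (mv E w)))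
    (μ : M) (l : EuclideanSpace ℝ ιl) :
    lyapunov (δ * ζ) (w - (ζ * Δt) • (v + coupling τ κ β C D w x l)) μ
        (l + (ζ * τ * Δt) • leakyResidual α C D w x l) x' - lyapunov (δ * ζ) w μ l x ≤
      ζ * Δt * ((stack w x l).ofLp ⬝ᵥ
        closedLoopMatrix σ ρ α β τ κ (ζ * Δt) δ C D E S *ᵥ (stack w x l).ofLp) := by
  have hcontroller := dotProduct_controllerMatrix_mulVec_stack (σ := σ) (τ := τ) hκ C D w x l
  have heuler := mul_le_mul_of_nonneg_left
    (norm_add_coupling_sq_add_le_dotProduct_discretizationMatrix_mulVec hρ α β τ κ C D hgrowth x l)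
    (sq_nonneg (ζ * Δt))
  have hdescent := mul_le_mul_of_nonneg_left hmono (mul_nonneg hζ hΔt)
  have hstorage := mul_le_mul_of_nonneg_left hplant (mul_nonneg hδ hζ)
  simp only [closedLoopMatrix, add_mulVec, smul_mulVec, dotProduct_add, dotProduct_smul,
    smul_eq_mul, dotProduct_congruence_mulVec, plantMatrix_mulVec_stack]
  rw [lyapunov, lyapunov, sub_eq_add_neg w, ← neg_smul, norm_add_smul_sq, norm_add_smul_sq,
    inner_add_right, hcontroller]
  linarith

open Filter Topology in
theorem eventually_lyapunov_multiplier_step_sub_neg {W M L Y : Type*} [NormedAddCommGroup W]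
    [NormedSpace ℝ W] [NormedAddCommGroup M] [InnerProductSpace ℝ M] [Norm L] [Norm Y] (ε : ℝ)
    {t : ℝ} (ht : 0 < t) (s : W) {μ ν : M} (hμν : ⟪μ, ν⟫ < 0) (l : L) (x : Y) :
    ∀ᶠ γ in 𝓝[>] (0 : ℝ),
      lyapunov ε (0 - t • γ • s) (μ + (t * γ) • ν) l x - lyapunov ε (0 : W) μ l x < 0 := by
  have hfactor (γ : ℝ) :
      lyapunov ε (0 - t • γ • s) (μ + (t * γ) • ν) l x - lyapunov ε (0 : W) μ l x =
        γ * (t * ⟪μ, ν⟫ + t ^ 2 / 2 * (‖s‖ ^ 2 + ‖ν‖ ^ 2) * γ) := by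
    rw [lyapunov, lyapunov, norm_add_smul_sq, zero_sub, norm_neg, smul_smul, norm_smul, mul_pow,
      Real.norm_eq_abs, sq_abs, norm_zero]
    ring
  have hneg : ∀ᶠ γ in 𝓝[>] (0 : ℝ), t * ⟪μ, ν⟫ + t ^ 2 / 2 * (‖s‖ ^ 2 + ‖ν‖ ^ 2) * γ < 0 :=
    eventually_neg_of_continuous (by fun_prop) (by simpa using mul_neg_of_pos_of_neg ht hμν)
  filter_upwards [hneg, self_mem_nhdsWithin] with γ hγ hpos
  rw [hfactor]
  exact mul_neg_of_pos_of_neg hpos hγ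

end Lyapunov

section Multiplier

variable {p : ℕ} {c : ℝ} {a μ : Fin p → ℝ}

theorem etaBar_mul_pplus_neg {i : Fin p} (hc : 0 < c) (ha : a i < 0) (hμ : 0 < μ i) :
    etaBar c a μ i * pplus a μ i < 0 := by
  have hplus : pplus a μ i = a i := if_pos hμ
  have heta : 0 < etaBar c a μ i := by
    simp only [etaBar, hplus]
    split_ifs
    · exact one_pos
    · exact div_pos_of_neg_of_neg (neg_neg_of_pos hμ) (mul_neg_of_pos_of_neg hc ha)
  rw [hplus]
  exact mul_neg_of_pos_of_neg heta ha

/-- The ascent direction `η̄ ∘ [a]_μ^+` of the update of the inequality multiplier `μ`, where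
`a = g(w)` and `c = ζΔt`. -/
noncomputable def multiplierDirection (c : ℝ) (a μ : Fin p → ℝ) : EuclideanSpace ℝ (Fin p) :=
  WithLp.toLp 2 fun i => etaBar c a μ i * pplus a μ i

theorem multiplierDirection_zero (c : ℝ) (ha : ∀ i, a i ≤ 0) : multiplierDirection c a 0 = 0 := by
  ext i
  simp [multiplierDirection, pplus, ha i]

theorem inner_multiplierDirection_neg {μ : EuclideanSpace ℝ (Fin p)} (hc : 0 < c)
    (ha : ∀ i, a i < 0) (hμ : ∀ i, 0 ≤ μ i) (hμ0 : μ ≠ 0) :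
    ⟪μ, multiplierDirection c a μ⟫ < 0 := by
  obtain ⟨i, hi⟩ : ∃ i, μ i ≠ 0 := by
    contrapose! hμ0
    exact PiLp.ext hμ0
  have hneg (j : Fin p) (hj : 0 < μ j) : μ j * (etaBar c a μ j * pplus a μ j) < 0 :=
    mul_neg_of_pos_of_neg hj (etaBar_mul_pplus_neg hc (ha j) hj)
  rw [inner_eq_dotProduct]
  refine Finset.sum_neg' (fun j _ => ?_) ⟨i, Finset.mem_univ i, hneg i ((hμ i).lt_of_ne' hi)⟩
  rcases (hμ j).eq_or_lt with hj | hj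
  · simp [← hj]
  · exact (hneg j hj).le

end Multiplier

/-- The closed loop with a plant map `F` of supply rate `S`, a field `Φ` in the role of `∇f`, and
directions `d w i` in the role of `∇g_i(w)`. -/
theorem discrete_closed_loop_stability_general
    {ιw ιx ιu ιl : Type*} [Fintype ιw] [Fintype ιx] [Fintype ιu] [Fintype ιl]
    [DecidableEq ιw] [DecidableEq ιx] [DecidableEq ιl] {p : ℕ} {σ ρ α β τ κ ζ Δt δ : ℝ}
    (hζ : 0 < ζ) (hρ : 0 ≤ ρ) (hΔt : 0 < Δt) (hδ : 0 ≤ δ) (hκ : κ = 1 + 2 * α * β)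
    {Φ : EuclideanSpace ℝ ιw → EuclideanSpace ℝ ιw}
    (hmono : ∀ v, σ * ‖v‖ ^ 2 ≤ ⟪v, Φ v⟫) (hgrowth : ∀ v, ‖Φ v‖ ≤ ρ * ‖v‖)
    {g : EuclideanSpace ℝ ιw → Fin p → ℝ} (hg0 : ∀ i, g 0 i < 0)
    (d : EuclideanSpace ℝ ιw → Fin p → EuclideanSpace ℝ ιw)
    (C : Matrix ιl ιw ℝ) (D : Matrix ιl ιx ℝ) (E : Matrix ιu ιw ℝ)
    {F : EuclideanSpace ℝ ιx → EuclideanSpace ℝ ιu → EuclideanSpace ℝ ιx}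
    {S : Matrix (ιx ⊕ ιu) (ιx ⊕ ιu) ℝ}
    (hplant : ∀ x u, (1 / 2) * ‖F x u‖ ^ 2 - (1 / 2) * ‖x‖ ^ 2 ≤
      Δt * (Sum.elim x u ⬝ᵥ S *ᵥ Sum.elim x u))
    (hH : (-(closedLoopMatrix σ ρ α β τ κ (ζ * Δt) δ C D E S)).PosDef)
    (w : EuclideanSpace ℝ ιw) {μ : EuclideanSpace ℝ (Fin p)} (l : EuclideanSpace ℝ ιl)
    (x : EuclideanSpace ℝ ιx) (hμ : ∀ i, 0 ≤ μ i) :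
    let ΔV : ℝ → ℝ := fun γ =>
      lyapunov (δ * ζ)
        (w - (ζ * Δt) • (Φ w + γ • (∑ i, (etaBar (ζ * Δt) (g w) μ i * μ i) • d w i) +
          coupling τ κ β C D w x l))
        (μ + (ζ * Δt * γ) • multiplierDirection (ζ * Δt) (g w) μ)
        (l + (ζ * τ * Δt) • leakyResidual α C D w x l) (F x (mv E w)) - lyapunov (δ * ζ) w μ l x
    (¬(w = 0 ∧ μ = 0 ∧ l = 0 ∧ x = 0) →
      ∃ γbar : ℝ, 0 < γbar ∧ γbar ≤ 1 ∧ ∀ γ : ℝ, 0 < γ → γ < γbar → ΔV γ < 0) ∧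
    ((w = 0 ∧ μ = 0 ∧ l = 0 ∧ x = 0) → ∀ γ : ℝ, ΔV γ = 0) := by
  intro ΔV
  have hstep : 0 < ζ * Δt := mul_pos hζ hΔt
  by_cases hstack : stack w x l = 0
  · obtain ⟨rfl, rfl, rfl⟩ := stack_eq_zero_iff.1 hstack
    have hΦ0 : Φ 0 = 0 := by simpa using hgrowth 0
    have hF0 : F 0 0 = 0 := by
      have hsq : (1 / 2) * ‖F 0 0‖ ^ 2 ≤ 0 := by simpa using hplant 0 0
      exact norm_eq_zero.1 (sq_nonpos_iff _ |>.1 (by linarith))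
    let s := ∑ i, (etaBar (ζ * Δt) (g 0) μ i * μ i) • d 0 i
    let ν := multiplierDirection (ζ * Δt) (g 0) μ
    have hΔV (γ : ℝ) : ΔV γ = lyapunov (δ * ζ) (0 - (ζ * Δt) • γ • s) (μ + (ζ * Δt * γ) • ν)
        (0 : EuclideanSpace ℝ ιl) (0 : EuclideanSpace ℝ ιx) - lyapunov (δ * ζ)
          (0 : EuclideanSpace ℝ ιw) μ (0 : EuclideanSpace ℝ ιl) (0 : EuclideanSpace ℝ ιx) := by
      simp only [ΔV, s, ν, coupling, leakyResidual, mv_zero, hΦ0, hF0, smul_zero, add_zero,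
        zero_add]
    simp only [hΔV, true_and, and_true]
    refine ⟨fun hne => exists_threshold_of_eventually_nhdsGT ?_, ?_⟩
    · exact eventually_lyapunov_multiplier_step_sub_neg _ hstep s
        (inner_multiplierDirection_neg hstep hg0 hμ hne) 0 0
    · rintro rfl γ
      simp [s, ν, multiplierDirection_zero _ fun i => (hg0 i).le]
  · refine ⟨fun _ => exists_threshold_of_eventually_nhdsGT (eventually_neg_of_continuous ?_ ?_),
      fun h => absurd (stack_eq_zero_iff.2 ⟨h.1, h.2.2.1, h.2.2.2⟩) hstack⟩
    · simp only [ΔV, lyapunov]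
      fun_prop
    · have hneg := hH.dotProduct_mulVec_pos (x := (stack w x l).ofLp) (by simpa using hstack)
      rw [star_trivial, neg_mulVec, dotProduct_neg, neg_pos] at hneg
      have hle := lyapunov_nominal_step_sub_le (τ := τ) hκ hρ hζ.le hΔt.le hδ C D E S (hmono w)
        (hgrowth w) (hplant x (mv E w)) μ l
      simpa [ΔV] using hle.trans_lt (mul_neg_of_pos_of_neg hstep hneg)

/-- under `H̄_d ≺ 0`, away from the origin there is a step-size threshold
`γ̄ ∈ (0,1]` so that the Lyapunov function decreases for all `γ ∈ (0, γ̄)`; at the origin the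
Lyapunov difference vanishes for every `γ ∈ (0,1]`. -/
theorem discrete_closed_loop_stability
    (nw n m nμ nl : ℕ) (α β ζ σ ρ Δt δ κ τ : ℝ)
    (hα : 0 < α) (hβ : 0 ≤ β) (hζ : 0 < ζ) (hσ : 0 < σ) (hρ : σ ≤ ρ)
    (hΔt : 0 < Δt) (hδ : 0 < δ)
    (hκ : κ = 1 + 2 * α * β) (hτ : τ = (1 + α * β)⁻¹)
    (f : EuclideanSpace ℝ (Fin nw) → ℝ)
    (f' : EuclideanSpace ℝ (Fin nw) → EuclideanSpace ℝ (Fin nw))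
    (hfdiff : ∀ v, HasGradientAt f (f' v) v)
    (hfsc : ConvexOn ℝ Set.univ (fun v => f v - σ / 2 * ‖v‖ ^ 2))
    (hlip : ∀ x y, ‖f' x - f' y‖ ≤ ρ * ‖x - y‖)
    (hf0 : f' 0 = 0)
    (g : EuclideanSpace ℝ (Fin nw) → Fin nμ → ℝ)
    (g' : EuclideanSpace ℝ (Fin nw) → Fin nμ → EuclideanSpace ℝ (Fin nw))
    (hgdiff : ∀ v i, HasGradientAt (fun u => g u i) (g' v i) v)
    (hgconv : ∀ i, ConvexOn ℝ Set.univ fun v => g v i)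
    (hg0 : ∀ i, g 0 i < 0)
    (C : Matrix (Fin nl) (Fin nw) ℝ) (D : Matrix (Fin nl) (Fin n) ℝ)
    (E : Matrix (Fin m) (Fin nw) ℝ)
    (Ad : Matrix (Fin n) (Fin n) ℝ) (Bd : Matrix (Fin n) (Fin m) ℝ)
    (HPd : Matrix (Fin n ⊕ Fin m) (Fin n ⊕ Fin m) ℝ) (hHPdsym : HPd.IsSymm)
    (hHPd11 : (-(HPd.toBlocks₁₁)).PosDef)
    (PPd : Matrix (Fin n ⊕ Fin m) (Fin n ⊕ Fin m) ℝ) (hPPd : PPd.PosSemidef)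
    (hplant : ∀ (x : EuclideanSpace ℝ (Fin n)) (u : EuclideanSpace ℝ (Fin m)),
      (1 / 2) * ‖mv Ad x + mv Bd u‖ ^ 2 - (1 / 2) * ‖x‖ ^ 2 ≤
        Δt * (Sum.elim x u ⬝ᵥ (HPd + Δt • PPd).mulVec (Sum.elim x u)))
    (HbCc : Matrix ((Fin nw ⊕ Fin n) ⊕ Fin nl) ((Fin nw ⊕ Fin n) ⊕ Fin nl) ℝ)
    (hHbCc : HbCc = Matrix.fromBlocks
      (Matrix.fromBlocks
        (-(σ • (1 : Matrix (Fin nw) (Fin nw) ℝ)) - (τ * κ * β) • (Cᵀ * C))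
        (-((τ * κ * β / 2) • (Cᵀ * D)))
        (-((τ * κ * β / 2) • (Dᵀ * C))) 0)
      (Matrix.fromRows (-((τ * α * β) • Cᵀ)) ((τ / 2) • Dᵀ))
      (Matrix.fromCols (-((τ * α * β) • C)) ((τ / 2) • D))
      (-((τ * α) • (1 : Matrix (Fin nl) (Fin nl) ℝ))))
    (X : Matrix (Fin nw) ((Fin nw ⊕ Fin n) ⊕ Fin nl) ℝ)
    (hX : X = (τ * κ) • (Cᵀ * Matrix.fromCols (Matrix.fromCols (β • C) (β • D))
      (1 : Matrix (Fin nl) (Fin nl) ℝ)))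
    (Pb : Matrix ((Fin nw ⊕ Fin n) ⊕ Fin nl) ((Fin nw ⊕ Fin n) ⊕ Fin nl) ℝ)
    (hPb : Pb = (ρ ^ 2 + 2 * ρ * opNorm X) •
      (1 : Matrix ((Fin nw ⊕ Fin n) ⊕ Fin nl) ((Fin nw ⊕ Fin n) ⊕ Fin nl) ℝ) + Xᵀ * X)
    (PbCd : Matrix ((Fin nw ⊕ Fin n) ⊕ Fin nl) ((Fin nw ⊕ Fin n) ⊕ Fin nl) ℝ)
    (hPbCd : PbCd = (1 / 2 : ℝ) • (Pb + (τ ^ 2) •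
      ((Matrix.fromCols (Matrix.fromCols C D)
          (-(α • (1 : Matrix (Fin nl) (Fin nl) ℝ))))ᵀ *
        Matrix.fromCols (Matrix.fromCols C D)
          (-(α • (1 : Matrix (Fin nl) (Fin nl) ℝ))))))
    (Wb : Matrix (Fin n ⊕ Fin m) ((Fin nw ⊕ Fin n) ⊕ Fin nl) ℝ)
    (hWb : Wb = Matrix.fromCols (Matrix.fromBlocks 0 1 E 0) 0)
    (hHbd : (-(HbCc + (ζ * Δt) • PbCd + δ • (Wbᵀ * (HPd + Δt • PPd) * Wb))).PosDef) :
    ∀ (w : EuclideanSpace ℝ (Fin nw)) (μ : EuclideanSpace ℝ (Fin nμ))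
      (lam : EuclideanSpace ℝ (Fin nl)) (x : EuclideanSpace ℝ (Fin n)),
      (∀ i, 0 ≤ μ i) →
      let V : EuclideanSpace ℝ (Fin nw) → EuclideanSpace ℝ (Fin nμ) →
          EuclideanSpace ℝ (Fin nl) → EuclideanSpace ℝ (Fin n) → ℝ :=
        fun w' μ' lam' x' =>
          (1 / 2) * (‖w'‖ ^ 2 + ‖μ'‖ ^ 2 + ‖lam'‖ ^ 2) + δ * ζ * ((1 / 2) * ‖x'‖ ^ 2);
      let ηb : Fin nμ → ℝ := etaBar (ζ * Δt) (g w) μ;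
      let wplus : ℝ → EuclideanSpace ℝ (Fin nw) := fun γ =>
        w - (ζ * Δt) • (f' w + γ • (∑ i, (ηb i * μ i) • g' w i) +
          (τ * κ) • mv Cᵀ (lam + β • (mv C w + mv D x)));
      let Δμf : ℝ → EuclideanSpace ℝ (Fin nμ) := fun γ =>
        (ζ * Δt * γ) • (WithLp.toLp 2 (fun i => ηb i * pplus (g w) μ i) : EuclideanSpace ℝ (Fin nμ));
      let μplus : ℝ → EuclideanSpace ℝ (Fin nμ) := fun γ => μ + Δμf γ;
      let lamplus : EuclideanSpace ℝ (Fin nl) :=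
        lam + (ζ * τ * Δt) • ((-α) • lam + mv C w + mv D x);
      let xplus : EuclideanSpace ℝ (Fin n) := mv Ad x + mv Bd (mv E w);
      (¬(w = 0 ∧ μ = 0 ∧ lam = 0 ∧ x = 0) →
        ∃ γbar : ℝ, 0 < γbar ∧ γbar ≤ 1 ∧ ∀ γ : ℝ, 0 < γ → γ < γbar →
          V (wplus γ) (μplus γ) lamplus xplus - V w μ lam x < 0) ∧
      ((w = 0 ∧ μ = 0 ∧ lam = 0 ∧ x = 0) →
        ∀ γ : ℝ, 0 < γ → γ ≤ 1 →
          V (wplus γ) (μplus γ) lamplus xplus - V w μ lam x = 0) := by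
  subst hHbCc hX hPb hPbCd hWb
  intro w μ lam x hμ
  have hmono (v) : σ * ‖v‖ ^ 2 ≤ ⟪v, f' v⟫ := by
    simpa [hf0] using mul_norm_sub_sq_le_inner_gradient_sub (strongConvexOn_iff_convex.2 hfsc)
      (Set.mem_univ 0) (Set.mem_univ v) (hfdiff 0) (hfdiff v)
  have hgrowth (v) : ‖f' v‖ ≤ ρ * ‖v‖ := by simpa [hf0] using hlip v 0
  have hgeneral := discrete_closed_loop_stability_general hζ (hσ.le.trans hρ) hΔt hδ.le hκ hmono
    hgrowth hg0 g' C D E hplant hHbd w lam x hμ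
  exact ⟨hgeneral.1, fun h0 γ _ _ => hgeneral.2 h0 γ⟩
end

section
/- Let ζ > 0, Δt > 0, γ ∈ (0, 1], and let g : ℝ^{n_w} → ℝ^{n_μ}. Suppose μ ∈ ℝ^{n_μ} with μ ≥ 0 componentwise and w ∈ ℝ^{n_w} satisfy the equilibrium condition η∘[g(w)]_μ^+ = 0, where η := γη̄ and η̄ is the step-size base vector. Then g(w) ≤ 0 componentwise. -/
open Matrix

local notation "⟪" x ", " y "⟫" => @inner ℝ _ _ x y

theorem pplus_apply_of_nonneg {p : ℕ} {a : Fin p → ℝ} (b : Fin p → ℝ) {i : Fin p}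
    (ha : 0 ≤ a i) : pplus a b i = a i := by
  simp only [pplus, max_eq_right ha, ite_self]

theorem etaBar_pos_of_pos {p : ℕ} {c : ℝ} (hc : 0 < c) {a : Fin p → ℝ} (μ : Fin p → ℝ)
    {i : Fin p} (ha : 0 < a i) : 0 < etaBar c a μ i := by
  have hca : 0 < c * a i := mul_pos hc ha
  rw [etaBar, pplus_apply_of_nonneg μ ha.le]
  split_ifs with hstep
  · exact one_pos
  · have hμ : 0 < -μ i := by linarith
    exact div_pos hμ hca

theorem equilibrium_satisfies_inequality_constraints_general {p : ℕ} {c γ : ℝ} (hc : 0 < c)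
    (hγ : γ ≠ 0) {a μ : Fin p → ℝ} (heq : ∀ i, γ * etaBar c a μ i * pplus a μ i = 0) :
    ∀ i, a i ≤ 0 := by
  intro i
  by_contra! ha
  have hη : γ * etaBar c a μ i ≠ 0 := mul_ne_zero hγ (etaBar_pos_of_pos hc μ ha).ne'
  have hpplus : pplus a μ i ≠ 0 := (pplus_apply_of_nonneg μ ha.le).trans_ne ha.ne'
  exact mul_ne_zero hη hpplus (heq i)

/-- if `η∘[g(w)]_μ^+ = 0` with `η = γη̄`, then `g(w) ≤ 0` componentwise. -/
theorem equilibrium_satisfies_inequality_constraints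
    (nw nμ : ℕ) (ζ Δt γ : ℝ) (hζ : 0 < ζ) (hΔt : 0 < Δt) (hγ0 : 0 < γ) (hγ1 : γ ≤ 1)
    (g : EuclideanSpace ℝ (Fin nw) → Fin nμ → ℝ)
    (w : EuclideanSpace ℝ (Fin nw)) (μ : EuclideanSpace ℝ (Fin nμ)) (hμ : ∀ i, 0 ≤ μ i)
    (heq : ∀ i, γ * etaBar (ζ * Δt) (g w) μ i * pplus (g w) μ i = 0) :
    ∀ i, g w i ≤ 0 :=
  equilibrium_satisfies_inequality_constraints_general (mul_pos hζ hΔt) hγ0.ne' heq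
end
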